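/- arXiv:1812.00632 — 5 statements merged into one kernel-verified Lean document; each statement's English description precedes it below -/
import Mathlib

section
/- Uniqueness addendum to the finite-horizon weak submartingale optimality principle (Lemma 2.1): In the setting of the finite-horizon optimality principle (hypotheses (i)–(iv) holding for the pair (α*, (W^{·,i})_i)), let α̃ ∈ A be any other Nash equilibrium such that E[W_0^{α̃,i}] = E[W_0^{α*,i}] and J^i(α̃) = J^i(α*) for every i ∈ {1,…,n}. Then for every i the map t ↦ E[S_t^{α̃,i}] is constant on [0,T], i.e. α̃ also satisfies condition (iv). -/
open MeasureTheory Set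

/-- Uniqueness addendum to the finite-horizon weak submartingale optimality principle
(Lemma 2.1): any other Nash equilibrium with the same initial value and the same costs
also satisfies condition (iv). -/
theorem finite_horizon_weak_submartingale_optimality_uniqueness
    {Ω : Type*} [MeasurableSpace Ω] (P : Measure Ω) [IsProbabilityMeasure P]
    (T ρ : ℝ) (hT : 0 < T) (hρ : 0 ≤ ρ)
    (n : ℕ) (hn : 1 ≤ n)
    (A : Fin n → Type*) (hA : ∀ i, Nonempty (A i))
    (αstar : ∀ i, A i)
    (W F : (∀ i, A i) → Fin n → ℝ → Ω → ℝ)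
    (G : (∀ i, A i) → Fin n → Ω → ℝ)
    (hWint : ∀ α i, ∀ t ∈ Icc (0 : ℝ) T, Integrable (W α i t) P)
    (hFmeas : ∀ α i, Measurable (Function.uncurry (F α i)))
    (hFint : ∀ α i,
      IntegrableOn (fun u => Real.exp (-ρ * u) * ∫ ω, |F α i u ω| ∂P) (Icc (0 : ℝ) T))
    (hGint : ∀ α i, Integrable (G α i) P)
    (S : (∀ i, A i) → Fin n → ℝ → Ω → ℝ)
    (hS : ∀ α i t ω, S α i t ω =
      Real.exp (-ρ * t) * W α i t ω + ∫ u in Icc (0 : ℝ) t, Real.exp (-ρ * u) * F α i u ω)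
    (J : Fin n → (∀ i, A i) → ℝ)
    (hJ : ∀ i α, J i α =
      ∫ ω, ((∫ u in Icc (0 : ℝ) T, Real.exp (-ρ * u) * F α i u ω)
        + Real.exp (-ρ * T) * G α i ω) ∂P)
    -- (i) E[W₀^{α,i}] does not depend on the i-th coordinate of α
    (h1 : ∀ i, ∀ α α' : ∀ j, A j, (∀ j, j ≠ i → α j = α' j) →
      ∫ ω, W α i 0 ω ∂P = ∫ ω, W α' i 0 ω ∂P)
    -- (ii) E[W_T^{α,i}] = E[G^{α,i}]
    (h2 : ∀ i α, ∫ ω, W α i T ω ∂P = ∫ ω, G α i ω ∂P)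
    -- (iii) t ↦ E[S_t^{α,i}] is well defined and nondecreasing on [0,T]
    (h3 : ∀ i α, (∀ t ∈ Icc (0 : ℝ) T, Integrable (S α i t) P) ∧
      MonotoneOn (fun t => ∫ ω, S α i t ω ∂P) (Icc (0 : ℝ) T))
    -- (iv) t ↦ E[S_t^{α*,i}] is constant on [0,T]
    (h4 : ∀ i, ∀ t ∈ Icc (0 : ℝ) T,
      ∫ ω, S αstar i t ω ∂P = ∫ ω, S αstar i 0 ω ∂P)
    -- α̃ is another Nash equilibrium with the same initial values and costs
    (αtilde : ∀ i, A i)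
    (hNash : ∀ i, ∀ ai : A i, J i αtilde ≤ J i (Function.update αtilde i ai))
    (hW0 : ∀ i, ∫ ω, W αtilde i 0 ω ∂P = ∫ ω, W αstar i 0 ω ∂P)
    (hJeq : ∀ i, J i αtilde = J i αstar) :
    ∀ i, ∀ t ∈ Icc (0 : ℝ) T,
      ∫ ω, S αtilde i t ω ∂P = ∫ ω, S αtilde i 0 ω ∂P := by
  have hSJ : ∀ i α, ∫ ω, S α i T ω ∂P = J i α := by
    intro i α
    have hTm : T ∈ Icc (0 : ℝ) T := ⟨hT.le, le_rfl⟩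
    have hSi := (h3 i α).1 T hTm
    have hWi := (hWint α i T hTm).const_mul (Real.exp (-ρ * T))
    have hGi := (hGint α i).const_mul (Real.exp (-ρ * T))
    have hI : Integrable
        (fun ω => ∫ u in Icc (0 : ℝ) T, Real.exp (-ρ * u) * F α i u ω) P := by
      refine (hSi.sub hWi).congr (Filter.Eventually.of_forall fun ω => ?_)
      simp only [Pi.sub_apply, hS]
      ring
    rw [hJ, integral_add hI hGi, integral_const_mul, ← h2]
    simp only [hS]
    rw [integral_add hWi hI, integral_const_mul]
    ring
  have hS0 : ∀ i α, ∫ ω, S α i 0 ω ∂P = ∫ ω, W α i 0 ω ∂P := by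
    intro i α
    simp [hS]
  intro i t ht
  have h0m : (0 : ℝ) ∈ Icc (0 : ℝ) T := ⟨le_rfl, hT.le⟩
  have hTm : T ∈ Icc (0 : ℝ) T := ⟨hT.le, le_rfl⟩
  have a : ∫ ω, S αtilde i 0 ω ∂P ≤ ∫ ω, S αtilde i t ω ∂P := (h3 i αtilde).2 h0m ht ht.1
  have b : ∫ ω, S αtilde i t ω ∂P ≤ ∫ ω, S αtilde i T ω ∂P := (h3 i αtilde).2 ht hTm ht.2
  have c := h4 i T hTm
  rw [hSJ, hS0] at c
  rw [hSJ, hJeq, c, ← hW0, ← hS0] at b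
  exact le_antisymm b a
end

section
/- Preservation of the Riccati positivity condition under a positive semidefinite perturbation (algebraic lemma used in Step 6(ii)): Let d, d₁ ≥ 1, δ > 0, K a symmetric positive semidefinite real d × d matrix, Q̂ a symmetric real d × d matrix, N̂ a symmetric real d₁ × d₁ matrix with N̂ ⪰ δ I_{d₁}, Î a real d₁ × d matrix, σ̂ₓ a real d × d matrix and σ̂ᵢ a real d × d₁ matrix. If Q̂ − Îᵀ N̂⁻¹ Î is positive semidefinite, then the matrix N̂ + σ̂ᵢᵀ K σ̂ᵢ is symmetric positive definite (hence invertible) and (Q̂ + σ̂ₓᵀ K σ̂ₓ) − (Î + σ̂ᵢᵀ K σ̂ₓ)ᵀ (N̂ + σ̂ᵢᵀ K σ̂ᵢ)⁻¹ (Î + σ̂ᵢᵀ K σ̂ₓ) is positive semidefinite. -/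
open Matrix

/-- Preservation of the Riccati positivity condition under a positive semidefinite
perturbation (algebraic lemma used in Step 6(ii)). -/
theorem riccati_positivity_preserved
    (d d₁ : ℕ) (hd : 1 ≤ d) (hd₁ : 1 ≤ d₁) (δ : ℝ) (hδ : 0 < δ)
    (K : Matrix (Fin d) (Fin d) ℝ) (hK : K.PosSemidef)
    (Qhat : Matrix (Fin d) (Fin d) ℝ) (hQhat : Qhat.IsHermitian)
    (Nhat : Matrix (Fin d₁) (Fin d₁) ℝ) (hNhatsymm : Nhat.IsHermitian)
    (hNhat : (Nhat - δ • (1 : Matrix (Fin d₁) (Fin d₁) ℝ)).PosSemidef)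
    (Ihat : Matrix (Fin d₁) (Fin d) ℝ)
    (σhatx : Matrix (Fin d) (Fin d) ℝ)
    (σhati : Matrix (Fin d) (Fin d₁) ℝ)
    (hQI : (Qhat - Ihatᵀ * Nhat⁻¹ * Ihat).PosSemidef) :
    (Nhat + σhatiᵀ * K * σhati).PosDef ∧
    ((Qhat + σhatxᵀ * K * σhatx) -
      (Ihat + σhatiᵀ * K * σhatx)ᵀ * (Nhat + σhatiᵀ * K * σhati)⁻¹ *
        (Ihat + σhatiᵀ * K * σhatx)).PosSemidef := by
  have hKt : Kᵀ = K := by simpa using hK.isHermitian.eq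
  have hN : Nhat.PosDef := by
    have h1 : (δ • (1 : Matrix (Fin d₁) (Fin d₁) ℝ)).PosDef := PosDef.one.smul hδ
    have := PosDef.posSemidef_add hNhat h1
    simpa using this
  have hS : (σhatiᵀ * K * σhati).PosSemidef := by
    simpa using hK.conjTranspose_mul_mul_same σhati
  have hM : (Nhat + σhatiᵀ * K * σhati).PosDef := hN.add_posSemidef hS
  refine ⟨hM, ?_⟩
  letI := hN.isUnit.invertible
  letI := hM.isUnit.invertible
  have e1 := PosDef.fromBlocks₂₂ Qhat Ihatᵀ hN
  have e2 := PosDef.fromBlocks₂₂ (Qhat + σhatxᵀ * K * σhatx) (Ihat + σhatiᵀ * K * σhatx)ᵀ hM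
  simp only [conjTranspose_eq_transpose_of_trivial, transpose_transpose] at e1 e2
  rw [← e2]
  have b1 := e1.mpr hQI
  have b2 := hK.conjTranspose_mul_mul_same (fromCols σhatx σhati)
  have := b1.add b2
  rw [conjTranspose_eq_transpose_of_trivial, transpose_fromCols, fromRows_mul,
    fromRows_mul_fromCols, fromBlocks_add] at this
  simpa [transpose_mul, hKt, Matrix.mul_assoc] using this
end

section
/- Well-posedness of the matrix Riccati ODE for K (Step 6(i)): Let T > 0, ρ ≥ 0, δ > 0, and let Q : [0,T] → S^d, bₓ, σₓ : [0,T] → ℝ^{d×d}, b₁, σ₁ : [0,T] → ℝ^{d×d₁}, I : [0,T] → ℝ^{d₁×d}, N : [0,T] → S^{d₁} be continuous and bounded, with, for every t ∈ [0,T]: Q_t positive semidefinite, N_t ⪰ δ I_{d₁}, and Q_t − I_tᵀ N_t⁻¹ I_t positive semidefinite. Let P be a symmetric positive semidefinite d × d matrix. Then there exists a unique bounded continuously differentiable map K : [0,T] → S^d, taking positive semidefinite values, such that K_T = P and for every t ∈ [0,T]: K′_t + Q_t + σₓ,ᵗᵀ K_t σₓ,ᵗ + K_t bₓ,ᵗ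 + bₓ,ᵗᵀ K_t − ρ K_t − (I_t + σ₁,ᵗᵀ K_t σₓ,ᵗ + b₁,ᵗᵀ K_t)ᵀ (N_t + σ₁,ᵗᵀ K_t σ₁,ᵗ)⁻¹ (I_t + σ₁,ᵗᵀ K_t σₓ,ᵗ + b₁,ᵗᵀ K_t) = 0. -/
open Matrix Set

attribute [local instance] Matrix.normedAddCommGroup Matrix.normedSpace

@[fun_prop]
lemma aux_contOn_transpose {X m n : Type*} [TopologicalSpace X] {A : X → Matrix m n ℝ} {s : Set X}
    (hA : ContinuousOn A s) : ContinuousOn (fun x => (A x)ᵀ) s :=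
  (continuous_id.matrix_transpose).comp_continuousOn hA

@[fun_prop]
lemma aux_contOn_mul {X l m n : Type*} [Fintype m] [TopologicalSpace X] {A : X → Matrix l m ℝ}
    {B : X → Matrix m n ℝ} {s : Set X}
    (hA : ContinuousOn A s) (hB : ContinuousOn B s) : ContinuousOn (fun x => A x * B x) s :=
  (continuous_fst.matrix_mul continuous_snd).comp_continuousOn (hA.prodMk hB)

@[fun_prop]
lemma aux_contOn_mulVec {X m n : Type*} [Fintype n] [TopologicalSpace X] {A : X → Matrix m n ℝ}
    {B : X → n → ℝ} {s : Set X}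
    (hA : ContinuousOn A s) (hB : ContinuousOn B s) : ContinuousOn (fun x => A x *ᵥ B x) s :=
  (continuous_fst.matrix_mulVec continuous_snd).comp_continuousOn (hA.prodMk hB)

@[fun_prop]
lemma aux_contOn_dot {X n : Type*} [Fintype n] [TopologicalSpace X] {A : X → n → ℝ}
    {B : X → n → ℝ} {s : Set X}
    (hA : ContinuousOn A s) (hB : ContinuousOn B s) : ContinuousOn (fun x => A x ⬝ᵥ B x) s :=
  (continuous_fst.dotProduct continuous_snd).comp_continuousOn (hA.prodMk hB)

lemma aux_ode_exist {E : Type*} [NormedAddCommGroup E] [NormedSpace ℝ E] [CompleteSpace E]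
    (hclamp : ∀ R : ℝ, 0 ≤ R → ∃ c : E → E, LipschitzWith 1 c ∧ (∀ x, ‖c x‖ ≤ R) ∧
      (∀ x, ‖c x‖ ≤ ‖x‖) ∧ ∀ x, ‖x‖ ≤ R → c x = x)
    (T : ℝ) (hT : 0 < T) (f : ℝ → E → E) (L : NNReal) (B : ℝ) (hB : 0 ≤ B)
    (hc : ∀ x, ContinuousOn (fun t => f t x) (Icc 0 T))
    (hl : ∀ t ∈ Icc (0:ℝ) T, LipschitzWith L (f t))
    (h0 : ∀ t ∈ Icc (0:ℝ) T, ‖f t 0‖ ≤ B) (x0 : E) :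
    ∃ X : ℝ → E, X T = x0 ∧
      ∀ t ∈ Icc (0:ℝ) T, HasDerivWithinAt X (f t (X t)) (Icc 0 T) t := by
  set R := gronwallBound ‖x0‖ L B T with hR
  have hmono := gronwallBound_mono (norm_nonneg x0) hB L.2
  have hR0 : 0 ≤ R := by
    have := hmono hT.le
    rw [gronwallBound_x0] at this
    exact (norm_nonneg _).trans this
  obtain ⟨c, c1, c2, c3, c4⟩ := hclamp R hR0
  have hgrow : ∀ t ∈ Icc (0:ℝ) T, ∀ x, ‖f t x‖ ≤ L * ‖x‖ + B := by
    intro t ht x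
    have h1 := (hl t ht).norm_sub_le x 0
    have h2 : ‖f t x‖ ≤ ‖f t x - f t 0‖ + ‖f t 0‖ := by
      simpa using norm_add_le (f t x - f t 0) (f t 0)
    rw [sub_zero] at h1
    linarith [h0 t ht]
  have hTm : T ∈ Icc (0:ℝ) T := ⟨hT.le, le_rfl⟩
  have hPL : IsPicardLindelof (fun t x => f t (c x)) (⟨T, hTm⟩ : Icc (0:ℝ) T) x0
      (Real.toNNReal ((L * R + B) * T)) 0 (Real.toNNReal (L * R + B)) (L * 1) := by
    have hn : 0 ≤ L * R + B := by positivity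
    refine ⟨?_, ?_, ?_, ?_⟩
    · intro t ht
      exact ((hl t ht).comp c1).lipschitzOnWith
    · intro x _
      exact hc (c x)
    · intro t ht x _
      rw [Real.coe_toNNReal _ hn]
      refine (hgrow t ht _).trans ?_
      gcongr
      exact c2 x
    · rw [Real.coe_toNNReal _ hn, Real.coe_toNNReal _ (by positivity)]
      simp [hT.le]
  obtain ⟨X, hX0, hX⟩ := hPL.exists_eq_forall_mem_Icc_hasDerivWithinAt₀
  simp only at hX0
  refine ⟨X, hX0, ?_⟩
  have hXc : ContinuousOn X (Icc 0 T) := fun t ht => (hX t ht).continuousWithinAt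
  have hmaps : MapsTo (fun s : ℝ => T - s) (Icc 0 T) (Icc 0 T) := by
    intro s hs
    exact ⟨by linarith [hs.2], by linarith [hs.1]⟩
  have hb : ∀ s ∈ Icc (0:ℝ) T, ‖X (T - s)‖ ≤ gronwallBound ‖x0‖ L B (s - 0) := by
    refine norm_le_gronwallBound_of_norm_deriv_right_le
      (f' := fun s => (-1:ℝ) • f (T - s) (c (X (T - s)))) ?_ ?_ ?_ ?_
    · exact hXc.comp (by fun_prop) hmaps
    · intro s hs
      have h1 := hX (T - s) (hmaps ⟨hs.1, hs.2.le⟩)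
      have h2 : HasDerivWithinAt (fun s : ℝ => T - s) (-1) (Icc 0 T) s :=
        ((hasDerivAt_id s).const_sub T).hasDerivWithinAt
      have h3 := h1.scomp s h2 hmaps
      refine (h3.mono_of_mem_nhdsWithin ?_)
      exact Filter.mem_of_superset (Icc_mem_nhdsGE hs.2) (Icc_subset_Icc hs.1 le_rfl)
    · simp [hX0]
    · intro s hs
      rw [norm_smul]
      simp only [norm_neg, norm_one, one_mul]
      refine (hgrow _ (hmaps ⟨hs.1, hs.2.le⟩) _).trans ?_
      gcongr
      exact c3 _
  intro t ht
  have h1 := hX t ht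
  have h2 := hb (T - t) (hmaps ht)
  rw [sub_sub_cancel, sub_zero] at h2
  have h3 : ‖X t‖ ≤ R := h2.trans (hmono (by linarith [ht.1]))
  rwa [c4 _ h3] at h1

lemma aux_clamp {m n : Type*} [Fintype m] [Fintype n] (R : ℝ) (hR : 0 ≤ R) :
    ∃ c : Matrix m n ℝ → Matrix m n ℝ, LipschitzWith 1 c ∧ (∀ x, ‖c x‖ ≤ R) ∧
      (∀ x, ‖c x‖ ≤ ‖x‖) ∧ ∀ x, ‖x‖ ≤ R → c x = x := by
  have hh : -R ≤ R := by linarith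
  have key : ∀ a b : ℝ, |max (-R) (min R a) - max (-R) (min R b)| ≤ |a - b| := by
    intro a b
    have := (LipschitzWith.projIcc hh).dist_le_mul a b
    simpa [Subtype.dist_eq, Real.dist_eq, coe_projIcc] using this
  refine ⟨fun x => Matrix.of fun i j => max (-R) (min R (x i j)), ?_, ?_, ?_, ?_⟩
  · refine LipschitzWith.of_dist_le_mul fun x y => ?_
    rw [dist_eq_norm, dist_eq_norm, NNReal.coe_one, one_mul,
      Matrix.norm_le_iff (norm_nonneg _)]
    intro i j
    exact (key _ _).trans (Matrix.norm_entry_le_entrywise_sup_norm (x - y))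
  · intro x
    rw [Matrix.norm_le_iff hR]
    intro i j
    rw [Real.norm_eq_abs, abs_le]
    exact ⟨le_max_left _ _, max_le hh (min_le_left _ _)⟩
  · intro x
    rw [Matrix.norm_le_iff (norm_nonneg _)]
    intro i j
    have := key (x i j) 0
    simp only [min_eq_right hR, max_eq_right (neg_nonpos.2 hR), sub_zero] at this
    exact this.trans (Matrix.norm_entry_le_entrywise_sup_norm x)
  · intro x hx
    ext i j
    have := (Matrix.norm_entry_le_entrywise_sup_norm x (i := i) (j := j)).trans hx
    rw [Real.norm_eq_abs, abs_le] at this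
    simp [min_eq_right this.2, max_eq_right this.1]

lemma aux_lin_exist {m n : Type*} [Fintype m] [Fintype n]
    (T : ℝ) (hT : 0 < T) (s : ℝ → Matrix m n ℝ) (l : ℝ → Matrix m n ℝ →ₗ[ℝ] Matrix m n ℝ)
    (hs : ContinuousOn s (Icc 0 T))
    (hl : ContinuousOn (fun p : ℝ × Matrix m n ℝ => l p.1 p.2) (Icc 0 T ×ˢ univ))
    (x0 : Matrix m n ℝ) :
    ∃ X : ℝ → Matrix m n ℝ, X T = x0 ∧
      ∀ t ∈ Icc (0:ℝ) T, HasDerivWithinAt X (s t + l t (X t)) (Icc 0 T) t := by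
  obtain ⟨B, hB⟩ := isCompact_Icc.exists_bound_of_continuousOn hs
  have hK : IsCompact (Icc (0:ℝ) T ×ˢ Metric.closedBall (0 : Matrix m n ℝ) 1) :=
    isCompact_Icc.prod (isCompact_closedBall _ _)
  obtain ⟨L, hL⟩ := hK.exists_bound_of_continuousOn
    (hl.mono (prod_mono le_rfl (subset_univ _)))
  have hlin : ∀ t ∈ Icc (0:ℝ) T, ∀ x, ‖l t x‖ ≤ |L| * ‖x‖ := by
    intro t ht x
    by_cases hx : x = 0
    · simp [hx]
    have hx' : 0 < ‖x‖ := norm_pos_iff.2 hx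
    have h1 := hL (t, ‖x‖⁻¹ • x) ⟨ht, by simp [norm_smul, hx'.ne']⟩
    simp only [map_smul, norm_smul, norm_inv, norm_norm] at h1
    rw [inv_mul_le_iff₀ hx', mul_comm] at h1
    exact h1.trans (by gcongr; exact le_abs_self L)
  refine aux_ode_exist aux_clamp T hT (fun t x => s t + l t x) (Real.toNNReal |L|) |B|
    (abs_nonneg _) ?_ ?_ ?_ x0
  · intro x
    refine hs.add (hl.comp (f := fun t => (t, x)) (by fun_prop) ?_)
    intro t ht
    exact ⟨ht, trivial⟩
  · intro t ht
    refine LipschitzWith.of_dist_le_mul fun x y => ?_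
    rw [dist_eq_norm, dist_eq_norm, add_sub_add_left_eq_sub, ← map_sub,
      Real.coe_toNNReal _ (abs_nonneg _)]
    exact hlin t ht _
  · intro t ht
    simpa using (hB t ht).trans (le_abs_self B)

lemma aux_psd_iff {n : Type*} [Fintype n] {M : Matrix n n ℝ} :
    M.PosSemidef ↔ Mᵀ = M ∧ ∀ x : n → ℝ, 0 ≤ x ⬝ᵥ M *ᵥ x := by
  rw [posSemidef_iff_dotProduct_mulVec, IsHermitian, conjTranspose_eq_transpose_of_trivial]
  simp

lemma aux_psd_conj {m n : Type*} [Fintype m] [Fintype n] {M : Matrix n n ℝ} (h : M.PosSemidef)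
    (B : Matrix n m ℝ) : (Bᵀ * M * B).PosSemidef := by
  have := h.conjTranspose_mul_mul_same B
  rwa [conjTranspose_eq_transpose_of_trivial] at this

lemma aux_deriv_lin {m n : Type*} [Fintype m] [Fintype n] {F : Type*} [NormedAddCommGroup F]
    [NormedSpace ℝ F] (q : Matrix m n ℝ →ₗ[ℝ] F) {D : ℝ → Matrix m n ℝ} {D' : Matrix m n ℝ}
    {s : Set ℝ} {t : ℝ} (h : HasDerivWithinAt D D' s t) :
    HasDerivWithinAt (fun t => q (D t)) (q D') s t :=
  (LinearMap.toContinuousLinearMap q).hasFDerivAt.comp_hasDerivWithinAt t h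

/-- the quadratic form as a linear functional of the matrix -/
def auxQ {n : Type*} [Fintype n] (x : n → ℝ) : Matrix n n ℝ →ₗ[ℝ] ℝ where
  toFun M := x ⬝ᵥ M *ᵥ x
  map_add' M N := by rw [add_mulVec, dotProduct_add]
  map_smul' c M := by rw [smul_mulVec, dotProduct_smul]; rfl

/-- the Lyapunov operator -/
def auxL {n : Type*} [Fintype n] (A C : Matrix n n ℝ) : Matrix n n ℝ →ₗ[ℝ] Matrix n n ℝ where
  toFun M := Cᵀ * M * C + M * A + Aᵀ * M
  map_add' M N := by noncomm_ring
  map_smul' c M := by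
    simp only [Matrix.mul_smul, Matrix.smul_mul, RingHom.id_apply, smul_add]

lemma auxL_apply {n : Type*} [Fintype n] (A C M : Matrix n n ℝ) :
    auxL A C M = Cᵀ * M * C + M * A + Aᵀ * M := rfl

lemma auxL_transpose {n : Type*} [Fintype n] (A C M : Matrix n n ℝ) :
    (auxL A C M)ᵀ = auxL A C Mᵀ := by
  simp only [auxL_apply, transpose_add, transpose_mul, transpose_transpose, Matrix.mul_assoc]
  abel

lemma aux_lyap_exist {n : Type*} [Fintype n] (T : ℝ) (hT : 0 < T) (A C S : ℝ → Matrix n n ℝ)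
    (hA : ContinuousOn A (Icc 0 T)) (hC : ContinuousOn C (Icc 0 T))
    (hS : ContinuousOn S (Icc 0 T)) (hSs : ∀ t ∈ Icc (0:ℝ) T, (S t)ᵀ = S t)
    (P : Matrix n n ℝ) (hP : Pᵀ = P) :
    ∃ X : ℝ → Matrix n n ℝ, X T = P ∧ (∀ t, (X t)ᵀ = X t) ∧
      ∀ t ∈ Icc (0:ℝ) T, HasDerivWithinAt X (-(S t + auxL (A t) (C t) (X t))) (Icc 0 T) t := by
  have hcA : ContinuousOn (fun p : ℝ × Matrix n n ℝ => A p.1) (Icc 0 T ×ˢ univ) :=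
    hA.comp continuousOn_fst fun p hp => hp.1
  have hcC : ContinuousOn (fun p : ℝ × Matrix n n ℝ => C p.1) (Icc 0 T ×ˢ univ) :=
    hC.comp continuousOn_fst fun p hp => hp.1
  obtain ⟨X, hX0, hX⟩ := aux_lin_exist T hT (fun t => - S t) (fun t => - auxL (A t) (C t)) hS.neg
    (by
      simp only [LinearMap.neg_apply, auxL_apply]
      fun_prop (disch := exact fun p hp => hp.1)) P
  refine ⟨fun t => (1/2 : ℝ) • (X t + (X t)ᵀ), ?_, ?_, ?_⟩
  · simp only [hX0, hP]
    rw [← two_smul ℝ P, smul_smul]; norm_num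
  · intro t
    rw [transpose_smul, transpose_add, transpose_transpose, add_comm]
  · intro t ht
    have h1 := hX t ht
    have h2 : HasDerivWithinAt (fun t => (X t)ᵀ) (-S t + (-auxL (A t) (C t)) (X t))ᵀ (Icc 0 T) t :=
      aux_deriv_lin (Matrix.transposeLinearEquiv n n ℝ ℝ).toLinearMap h1
    have h3 := (h1.add h2).const_smul (1/2 : ℝ)
    refine h3.congr_deriv ?_
    simp only [LinearMap.neg_apply, transpose_add, transpose_neg, auxL_transpose, map_smul, map_add, hSs t ht]
    module

lemma aux_sphere_compact {n : Type*} [Fintype n] : IsCompact {x : n → ℝ | x ⬝ᵥ x = 1} := by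
  refine (isCompact_closedBall (0 : n → ℝ) 1).of_isClosed_subset ?_ ?_
  · exact isClosed_eq (by fun_prop) continuous_const
  · intro x hx
    rw [mem_closedBall_zero_iff, pi_norm_le_iff_of_nonneg zero_le_one]
    intro i
    have h : x i * x i ≤ x ⬝ᵥ x :=
      Finset.single_le_sum (f := fun i => x i * x i) (fun i _ => mul_self_nonneg _)
        (Finset.mem_univ i)
    rw [mem_ofPred_eq] at hx
    rw [hx] at h
    rw [Real.norm_eq_abs]
    exact abs_le_one_iff_mul_self_le_one.2 h

lemma aux_pos {n : Type*} [Fintype n] [DecidableEq n] (T : ℝ) (hT : 0 < T)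
    (A C S D : ℝ → Matrix n n ℝ)
    (hA : ContinuousOn A (Icc 0 T)) (hC : ContinuousOn C (Icc 0 T))
    (hS : ∀ t ∈ Icc (0:ℝ) T, (S t).PosSemidef)
    (hDs : ∀ t ∈ Icc (0:ℝ) T, (D t)ᵀ = D t) (hDT : (D T).PosSemidef)
    (hD : ∀ t ∈ Icc (0:ℝ) T,
      HasDerivWithinAt D (-(S t + auxL (A t) (C t) (D t))) (Icc 0 T) t) :
    ∀ t ∈ Icc (0:ℝ) T, (D t).PosSemidef := by
  have hDc : ContinuousOn D (Icc 0 T) := fun t ht => (hD t ht).continuousWithinAt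
  set Sp := {x : n → ℝ | x ⬝ᵥ x = 1} with hSp
  have hcomp : IsCompact (Icc (0:ℝ) T ×ˢ Sp) := isCompact_Icc.prod aux_sphere_compact
  have lift : ∀ {F : ℝ → Matrix n n ℝ}, ContinuousOn F (Icc 0 T) →
      ContinuousOn (fun p : ℝ × (n → ℝ) => F p.1) (Icc 0 T ×ˢ Sp) := fun hF =>
    hF.comp continuousOn_fst fun p hp => hp.1
  have hcA := lift hA
  have hcC := lift hC
  have hcD := lift hDc
  obtain ⟨lam, hlam⟩ := hcomp.exists_bound_of_continuousOn
    (f := fun p : ℝ × (n → ℝ) => p.2 ⬝ᵥ (auxL (A p.1) (C p.1) 1) *ᵥ p.2) (by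
      simp only [auxL_apply]
      fun_prop (disch := exact fun p hp => hp.1))
  set mu := lam + 1
  have key : ∀ ε : ℝ, 0 < ε → ∀ t ∈ Icc (0:ℝ) T, ∀ x ∈ Sp,
      0 < x ⬝ᵥ D t *ᵥ x + ε * Real.exp (mu * (T - t)) := by
    intro ε hε
    by_contra hcon
    push Not at hcon
    obtain ⟨t0, ht0, x0, hx0, hneg⟩ := hcon
    set Z := {p : ℝ × (n → ℝ) | p ∈ Icc (0:ℝ) T ×ˢ Sp ∧
      p.2 ⬝ᵥ D p.1 *ᵥ p.2 + ε * Real.exp (mu * (T - p.1)) ≤ 0} with hZ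
    have hZc : IsCompact Z := by
      refine hcomp.of_isClosed_subset ?_ (fun p hp => hp.1)
      have hcont : ContinuousOn (fun p : ℝ × (n → ℝ) => p.2 ⬝ᵥ D p.1 *ᵥ p.2 +
        ε * Real.exp (mu * (T - p.1))) (Icc (0:ℝ) T ×ˢ Sp) := by
          fun_prop (disch := exact fun p hp => hp.1)
      exact hcont.preimage_isClosed_of_isClosed hcomp.isClosed isClosed_Iic
    obtain ⟨⟨t, x⟩, ⟨⟨ht, hx⟩, hm⟩, hmax⟩ := hZc.exists_isMaxOn ⟨(t0, x0), ⟨ht0, hx0⟩, hneg⟩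
      (continuousOn_fst)
    simp only at ht hx hm
    have hxx : x ⬝ᵥ x = 1 := hx
    have htT : t < T := by
      rcases lt_or_eq_of_le ht.2 with h | h
      · exact h
      · exfalso
        rw [h] at hm
        have := (aux_psd_iff.1 hDT).2 x
        simp at hm
        linarith
    have hafter : ∀ s ∈ Ioc t T, ∀ y ∈ Sp,
        0 < y ⬝ᵥ D s *ᵥ y + ε * Real.exp (mu * (T - s)) := by
      intro s hs y hy
      by_contra hc
      push Not at hc
      have : s ≤ t := hmax (a := (s, y)) ⟨⟨⟨ht.1.trans hs.1.le, hs.2⟩, hy⟩, hc⟩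
      exact absurd hs.1 (not_lt.2 this)
    -- derivative of the scalar function
    set e := Real.exp (mu * (T - t)) with he
    have hepos : 0 < e := Real.exp_pos _
    have hder : ∀ y : n → ℝ, HasDerivWithinAt
        (fun s => y ⬝ᵥ D s *ᵥ y + ε * Real.exp (mu * (T - s)))
        (y ⬝ᵥ (-(S t + auxL (A t) (C t) (D t))) *ᵥ y + ε * (e * (mu * -1))) (Icc 0 T) t := by
      intro y
      have h1 : HasDerivWithinAt (fun s => y ⬝ᵥ D s *ᵥ y) _ _ _ :=
        aux_deriv_lin (auxQ y) (hD t ht)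
      have h2 : HasDerivAt (fun s : ℝ => mu * (T - s)) (mu * -1) t :=
        ((hasDerivAt_id t).const_sub T).const_mul mu
      exact h1.add ((h2.exp.const_mul ε).hasDerivWithinAt)
    have hnhds : Ioc t T ∈ nhdsWithin t (Ioi t) := Ioc_mem_nhdsGT htT
    have hsub : Ioc t T ⊆ Icc 0 T := fun s hs => ⟨ht.1.trans hs.1.le, hs.2⟩
    have hge : ∀ y ∈ Sp, 0 ≤ y ⬝ᵥ D t *ᵥ y + ε * e := by
      intro y hy
      have h1 := ((hder y).continuousWithinAt.mono hsub).tendsto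
      rw [nhdsWithin_Ioc_eq_nhdsGT htT] at h1
      refine ge_of_tendsto h1 ?_
      filter_upwards [hnhds] with s hs using (hafter s hs y hy).le
    have hzero : x ⬝ᵥ D t *ᵥ x + ε * e = 0 := le_antisymm hm (hge x hx)
    -- the shifted matrix is positive semidefinite
    set E := D t + (ε * e) • (1 : Matrix n n ℝ) with hE
    have hEq : ∀ y : n → ℝ, y ⬝ᵥ E *ᵥ y = y ⬝ᵥ D t *ᵥ y + ε * e * (y ⬝ᵥ y) := by
      intro y
      rw [hE, add_mulVec, dotProduct_add, smul_mulVec, dotProduct_smul, one_mulVec, smul_eq_mul]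
    have hEpsd : E.PosSemidef := by
      refine aux_psd_iff.2 ⟨?_, ?_⟩
      · rw [hE, transpose_add, hDs t ht, transpose_smul, transpose_one]
      · intro y
        by_cases hy : y = 0
        · simp [hy]
        have hyy : 0 < y ⬝ᵥ y := by
          have h0 : 0 ≤ y ⬝ᵥ y := Finset.sum_nonneg fun i _ => mul_self_nonneg _
          refine lt_of_le_of_ne h0 (fun h => hy ?_)
          exact dotProduct_self_eq_zero.1 h.symm
        set r := Real.sqrt (y ⬝ᵥ y) with hr
        have hrpos : 0 < r := Real.sqrt_pos.2 hyy
        have hrr : r * r = y ⬝ᵥ y := Real.mul_self_sqrt hyy.le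
        have h1 := hge (r⁻¹ • y) (by
          rw [hSp, mem_ofPred_eq, smul_dotProduct, dotProduct_smul, smul_eq_mul, smul_eq_mul,
            ← hrr]
          field_simp)
        rw [mulVec_smul, smul_dotProduct, dotProduct_smul, smul_eq_mul, smul_eq_mul] at h1
        rw [hEq, ← hrr]
        have h2 : 0 ≤ (r * r) * (r⁻¹ * (r⁻¹ * y ⬝ᵥ D t *ᵥ y) + ε * e) := by positivity
        have h3 : (r * r) * (r⁻¹ * (r⁻¹ * y ⬝ᵥ D t *ᵥ y) + ε * e) =
          y ⬝ᵥ D t *ᵥ y + ε * e * (r * r) := by field_simp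
        rwa [h3] at h2
    have hEx : E *ᵥ x = 0 := by
      refine (hEpsd.dotProduct_mulVec_zero_iff x).1 ?_
      rw [star_trivial, hEq, hxx, mul_one, hzero]
    have hEt : Eᵀ = E := (aux_psd_iff.1 hEpsd).1
    have hLE : 0 ≤ x ⬝ᵥ (auxL (A t) (C t) E) *ᵥ x := by
      rw [auxL_apply, add_mulVec, add_mulVec, dotProduct_add, dotProduct_add]
      have e1 : x ⬝ᵥ ((A t)ᵀ * E) *ᵥ x = 0 := by
        rw [← mulVec_mulVec, hEx, mulVec_zero, dotProduct_zero]
      have e2 : x ⬝ᵥ (E * A t) *ᵥ x = 0 := by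
        rw [← mulVec_mulVec, dotProduct_mulVec, ← mulVec_transpose, hEt, hEx, zero_dotProduct]
      rw [e1, e2, add_zero, add_zero]
      exact (aux_psd_iff.1 (aux_psd_conj hEpsd (C t))).2 x
    have hLsplit : x ⬝ᵥ (auxL (A t) (C t) (D t)) *ᵥ x =
        x ⬝ᵥ (auxL (A t) (C t) E) *ᵥ x - ε * e * (x ⬝ᵥ (auxL (A t) (C t) 1) *ᵥ x) := by
      have : D t = E - (ε * e) • (1 : Matrix n n ℝ) := by rw [hE]; abel
      rw [this, map_sub, map_smul, sub_mulVec, dotProduct_sub, smul_mulVec, dotProduct_smul,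
        smul_eq_mul]
    have hlamx : x ⬝ᵥ (auxL (A t) (C t) 1) *ᵥ x ≤ lam :=
      (le_abs_self _).trans (hlam (t, x) ⟨ht, hx⟩)
    have hSx := (aux_psd_iff.1 (hS t ht)).2 x
    have hdneg : x ⬝ᵥ (-(S t + auxL (A t) (C t) (D t))) *ᵥ x + ε * (e * (mu * -1)) < 0 := by
      rw [neg_mulVec, dotProduct_neg, add_mulVec, dotProduct_add, hLsplit]
      have h1 : 0 < ε * e := by positivity
      have h2 : ε * e * (x ⬝ᵥ (auxL (A t) (C t) 1) *ᵥ x) ≤ ε * e * lam := by gcongr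
      have h3 : ε * (e * (mu * -1)) = - (ε * e * lam) - ε * e := by ring
      rw [h3]
      linarith
    have hslope := (hasDerivWithinAt_iff_tendsto_slope.1 ((hder x).mono hsub))
    have hdiff : Ioc t T \ {t} = Ioc t T := by
      ext s; simp only [mem_sdiff, mem_Ioc, mem_singleton_iff]
      exact ⟨fun h => h.1, fun h => ⟨h, h.1.ne'⟩⟩
    rw [hdiff, nhdsWithin_Ioc_eq_nhdsGT htT] at hslope
    have : 0 ≤ x ⬝ᵥ (-(S t + auxL (A t) (C t) (D t))) *ᵥ x + ε * (e * (mu * -1)) := by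
      refine ge_of_tendsto hslope ?_
      filter_upwards [hnhds] with s hs
      rw [slope_def_field]
      refine div_nonneg ?_ (by linarith [hs.1])
      have := hafter s hs x hx
      linarith [hzero]
    linarith
  intro t ht
  refine aux_psd_iff.2 ⟨hDs t ht, fun y => ?_⟩
  by_cases hy : y = 0
  · simp [hy]
  have hyy : 0 < y ⬝ᵥ y := by
    have h0 : 0 ≤ y ⬝ᵥ y := Finset.sum_nonneg fun i _ => mul_self_nonneg _
    refine lt_of_le_of_ne h0 (fun h => hy ?_)
    exact dotProduct_self_eq_zero.1 h.symm
  set r := Real.sqrt (y ⬝ᵥ y) with hr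
  have hrpos : 0 < r := Real.sqrt_pos.2 hyy
  have hrr : r * r = y ⬝ᵥ y := Real.mul_self_sqrt hyy.le
  have hmem : r⁻¹ • y ∈ Sp := by
    rw [hSp, mem_ofPred_eq, smul_dotProduct, dotProduct_smul, smul_eq_mul, smul_eq_mul, ← hrr]
    field_simp
  have h1 : 0 ≤ (r⁻¹ • y) ⬝ᵥ D t *ᵥ (r⁻¹ • y) := by
    by_contra hc
    push Not at hc
    have hE := Real.exp_pos (mu * (T - t))
    have := key (-((r⁻¹ • y) ⬝ᵥ D t *ᵥ (r⁻¹ • y)) / Real.exp (mu * (T - t)))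
      (div_pos (by linarith) hE) t ht _ hmem
    rw [div_mul_cancel₀ _ hE.ne'] at this
    linarith
  rw [mulVec_smul, smul_dotProduct, dotProduct_smul, smul_eq_mul, smul_eq_mul] at h1
  have h2 : 0 ≤ (r * r) * (r⁻¹ * (r⁻¹ * y ⬝ᵥ D t *ᵥ y)) := by positivity
  have h3 : (r * r) * (r⁻¹ * (r⁻¹ * y ⬝ᵥ D t *ᵥ y)) = y ⬝ᵥ D t *ᵥ y := by field_simp
  rwa [h3] at h2

lemma aux_sq {m n : Type*} [Fintype m] [Fintype n] [DecidableEq m] (R : Matrix m m ℝ)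
    (hR : Rᵀ = R) (hu : IsUnit R) (M Θ : Matrix m n ℝ) :
    (Θ + R⁻¹ * M)ᵀ * R * (Θ + R⁻¹ * M) =
      Θᵀ * R * Θ + Θᵀ * M + Mᵀ * Θ + Mᵀ * R⁻¹ * M := by
  have hd : IsUnit R.det := (Matrix.isUnit_iff_isUnit_det R).1 hu
  have h1 : R * (Θ + R⁻¹ * M) = R * Θ + M := by
    rw [Matrix.mul_add, Matrix.mul_nonsing_inv_cancel_left _ _ hd]
  have h2 : (R⁻¹ * M)ᵀ = Mᵀ * R⁻¹ := by
    rw [transpose_mul, transpose_nonsing_inv, hR]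
  rw [Matrix.mul_assoc, h1, transpose_add, h2]
  simp only [Matrix.add_mul, Matrix.mul_add, Matrix.mul_assoc]
  rw [Matrix.nonsing_inv_mul_cancel_left _ _ hd]
  abel

section defs
variable {m n : Type*} [Fintype m] [Fintype n]

/-- cross term -/
def auxM (I : Matrix m n ℝ) (σx : Matrix n n ℝ) (b₁ σ₁ : Matrix n m ℝ) (K : Matrix n n ℝ) :
    Matrix m n ℝ := I + σ₁ᵀ * K * σx + b₁ᵀ * K

/-- weight of the control -/
def auxR (N : Matrix m m ℝ) (σ₁ : Matrix n m ℝ) (K : Matrix n n ℝ) : Matrix m m ℝ :=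
  N + σ₁ᵀ * K * σ₁

/-- running cost of a feedback -/
def auxS (Q : Matrix n n ℝ) (I : Matrix m n ℝ) (N : Matrix m m ℝ) (Θ : Matrix m n ℝ) :
    Matrix n n ℝ := Q + Iᵀ * Θ + Θᵀ * I + Θᵀ * N * Θ

/-- drift under feedback -/
noncomputable def auxA [DecidableEq n] (ρ : ℝ) (bx : Matrix n n ℝ) (b₁ : Matrix n m ℝ) (Θ : Matrix m n ℝ) :
    Matrix n n ℝ := bx + b₁ * Θ - (ρ / 2) • (1 : Matrix n n ℝ)

/-- diffusion under feedback -/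
def auxC (σx : Matrix n n ℝ) (σ₁ : Matrix n m ℝ) (Θ : Matrix m n ℝ) :
    Matrix n n ℝ := σx + σ₁ * Θ

lemma aux_cost_eq [DecidableEq m] [DecidableEq n] (ρ : ℝ) (Q bx σx : Matrix n n ℝ)
    (b₁ σ₁ : Matrix n m ℝ)
    (I : Matrix m n ℝ) (N : Matrix m m ℝ) (Θ : Matrix m n ℝ) (K : Matrix n n ℝ)
    (hK : Kᵀ = K) (hN : Nᵀ = N) (hu : IsUnit (auxR N σ₁ K)) :
    auxS Q I N Θ + auxL (auxA ρ bx b₁ Θ) (auxC σx σ₁ Θ) K =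
      (Q + σxᵀ * K * σx + K * bx + bxᵀ * K - ρ • K -
        (I + σ₁ᵀ * K * σx + b₁ᵀ * K)ᵀ * (N + σ₁ᵀ * K * σ₁)⁻¹ *
          (I + σ₁ᵀ * K * σx + b₁ᵀ * K)) +
      (Θ + (auxR N σ₁ K)⁻¹ * auxM I σx b₁ σ₁ K)ᵀ * auxR N σ₁ K *
        (Θ + (auxR N σ₁ K)⁻¹ * auxM I σx b₁ σ₁ K) := by
  have hR : (auxR N σ₁ K)ᵀ = auxR N σ₁ K := by
    simp only [auxR, transpose_add, transpose_mul, transpose_transpose, hK, hN, Matrix.mul_assoc]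
  rw [aux_sq _ hR hu]
  change _ = (Q + σxᵀ * K * σx + K * bx + bxᵀ * K - ρ • K -
        (auxM I σx b₁ σ₁ K)ᵀ * (auxR N σ₁ K)⁻¹ * auxM I σx b₁ σ₁ K) + _
  generalize (auxM I σx b₁ σ₁ K)ᵀ * (auxR N σ₁ K)⁻¹ * auxM I σx b₁ σ₁ K = Z
  simp only [auxS, auxL_apply, auxA, auxC, auxM, auxR, transpose_add, transpose_mul,
    transpose_transpose, transpose_sub, transpose_smul, transpose_one, hK, Matrix.add_mul,
    Matrix.mul_add, Matrix.mul_sub, Matrix.sub_mul, Matrix.mul_smul, Matrix.smul_mul,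
    Matrix.mul_one, Matrix.one_mul, Matrix.mul_assoc]
  module

lemma auxS_psd [DecidableEq m] (Q : Matrix n n ℝ) (I : Matrix m n ℝ) (N : Matrix m m ℝ)
    (hN : N.PosDef) (hQ : (Q - Iᵀ * N⁻¹ * I).PosSemidef) (Θ : Matrix m n ℝ) :
    (auxS Q I N Θ).PosSemidef := by
  have h1 := aux_sq N (aux_psd_iff.1 hN.posSemidef).1 hN.isUnit I Θ
  have h2 := hQ.add (aux_psd_conj hN.posSemidef (Θ + N⁻¹ * I))
  rw [h1] at h2
  convert h2 using 1
  rw [auxS]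
  abel

lemma aux_N_posDef [DecidableEq m] (N : Matrix m m ℝ) (δ : ℝ) (hδ : 0 < δ)
    (h : (N - δ • (1 : Matrix m m ℝ)).PosSemidef) : N.PosDef := by
  have h1 : (δ • (1 : Matrix m m ℝ)).PosDef := PosDef.one.smul hδ
  have := PosDef.posSemidef_add h h1
  simpa using this

lemma aux_R_posDef (N : Matrix m m ℝ) (hN : N.PosDef) (σ₁ : Matrix n m ℝ)
    (K : Matrix n n ℝ) (hK : K.PosSemidef) : (auxR N σ₁ K).PosDef :=
  hN.add_posSemidef (aux_psd_conj hK σ₁)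

end defs

lemma aux_contOn_inv {X m : Type*} [Fintype m] [DecidableEq m] [TopologicalSpace X]
    {A : X → Matrix m m ℝ} {s : Set X} (hA : ContinuousOn A s) (hu : ∀ x ∈ s, IsUnit (A x)) :
    ContinuousOn (fun x => (A x)⁻¹) s := by
  intro x hx
  have hd : IsUnit (A x).det := (Matrix.isUnit_iff_isUnit_det _).1 (hu x hx)
  have h : ContinuousAt (fun B : Matrix m m ℝ => B⁻¹) (A x) := by
    refine continuousAt_matrix_inv _ ?_
    have : Ring.inverse = (Inv.inv : ℝ → ℝ) := by ext; simp
    rw [this]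
    exact continuousAt_inv₀ hd.ne_zero
  exact h.comp_continuousWithinAt (hA x hx)

lemma aux_psd_closed {n : Type*} [Fintype n] : IsClosed {K : Matrix n n ℝ | K.PosSemidef} := by
  have : {K : Matrix n n ℝ | K.PosSemidef} =
      {K | Kᵀ = K} ∩ ⋂ x : n → ℝ, {K | 0 ≤ x ⬝ᵥ K *ᵥ x} := by
    ext K
    simp [aux_psd_iff]
  rw [this]
  refine IsClosed.inter (isClosed_eq (continuous_id.matrix_transpose) continuous_id) ?_
  refine isClosed_iInter fun x => isClosed_le continuous_const ?_
  exact continuous_const.dotProduct (continuous_id.matrix_mulVec continuous_const)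

lemma aux_polar {n : Type*} [Fintype n] [DecidableEq n] (A : Matrix n n ℝ) (hA : Aᵀ = A)
    (i j : n) (r : ℝ) : auxQ (Pi.single i 1 + r • Pi.single j 1) A =
      A i i + 2 * r * A i j + r ^ 2 * A j j := by
  have h : A j i = A i j := by conv_lhs => rw [← hA, transpose_apply]
  change (Pi.single i 1 + r • Pi.single j 1) ⬝ᵥ A *ᵥ (Pi.single i 1 + r • Pi.single j 1) = _
  simp only [mulVec_add, mulVec_smul, add_dotProduct, dotProduct_add, smul_dotProduct,
    dotProduct_smul, smul_eq_mul, mulVec_single_one, single_one_dotProduct, col_apply, h]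
  ring

lemma aux_psd_norm {n : Type*} [Fintype n] (A B : Matrix n n ℝ) (hB : B.PosSemidef)
    (hAB : (A - B).PosSemidef) : ‖B‖ ≤ ‖A‖ := by
  classical
  rw [Matrix.norm_le_iff (norm_nonneg _)]
  intro i j
  have hd : ∀ i, B i i ≤ ‖A‖ := by
    intro i
    have h1 := hAB.diag_nonneg (i := i)
    have h2 := (le_abs_self _).trans (Matrix.norm_entry_le_entrywise_sup_norm A (i := i) (j := i))
    rw [Matrix.sub_apply] at h1
    linarith
  have hq : ∀ r : ℝ, 0 ≤ B i i + 2 * r * B i j + r ^ 2 * B j j := by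
    intro r
    rw [← aux_polar B (aux_psd_iff.1 hB).1]
    exact (aux_psd_iff.1 hB).2 _
  have h1 := hq 1
  have h2 := hq (-1)
  have h3 := hd i
  have h4 := hd j
  rw [Real.norm_eq_abs, abs_le]
  constructor <;> linarith

lemma aux_psd_tendsto {n : Type*} [Fintype n] (A : ℕ → Matrix n n ℝ)
    (hA : ∀ k, (A k).PosSemidef) (hd : ∀ k, (A k - A (k + 1)).PosSemidef) :
    ∃ B, Filter.Tendsto A Filter.atTop (nhds B) := by
  classical
  have hq : ∀ x : n → ℝ, ∃ b, Filter.Tendsto (fun k => auxQ x (A k)) Filter.atTop (nhds b) := by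
    intro x
    refine ⟨_, tendsto_atTop_ciInf (antitone_nat_of_succ_le fun k => ?_) ⟨0, ?_⟩⟩
    · have := (aux_psd_iff.1 (hd k)).2 x
      change 0 ≤ auxQ x (A k - A (k + 1)) at this
      rw [map_sub] at this
      linarith
    · rintro _ ⟨k, rfl⟩
      exact (aux_psd_iff.1 (hA k)).2 x
  choose b hb using hq
  have hs : ∀ k, (A k)ᵀ = A k := fun k => (aux_psd_iff.1 (hA k)).1
  refine ⟨Matrix.of fun i j => (b (Pi.single i 1 + (1:ℝ) • Pi.single j 1) -
    b (Pi.single i 1 + (-1:ℝ) • Pi.single j 1)) / 4, ?_⟩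
  refine tendsto_pi_nhds.2 fun i => tendsto_pi_nhds.2 fun j => ?_
  have h := ((hb (Pi.single i 1 + (1:ℝ) • Pi.single j 1)).sub
    (hb (Pi.single i 1 + (-1:ℝ) • Pi.single j 1))).div_const 4
  refine h.congr fun k => ?_
  rw [aux_polar _ (hs k), aux_polar _ (hs k)]
  ring

lemma aux_limit {E : Type*} [NormedAddCommGroup E] [NormedSpace ℝ E] [CompleteSpace E]
    (T : ℝ) (hT : 0 < T) (U : Set E) (hU : IsClosed U) (H : ℝ → E → E → E)
    (hH : ContinuousOn (fun p : ℝ × E × E => H p.1 p.2.1 p.2.2) (Icc 0 T ×ˢ U ×ˢ U))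
    (B : ℝ) (hB : ∀ t ∈ Icc (0:ℝ) T, ∀ x ∈ U, ∀ y ∈ U, ‖H t x y‖ ≤ B)
    (P : E) (X : ℕ → ℝ → E) (Y : ℝ → E)
    (hXU : ∀ k, ∀ t ∈ Icc (0:ℝ) T, X k t ∈ U) (hXT : ∀ k, X k T = P)
    (hXc : ∀ k, ContinuousOn (X k) (Icc 0 T))
    (hX : ∀ k, ∀ t ∈ Icc (0:ℝ) T,
      HasDerivWithinAt (X (k + 1)) (H t (X k t) (X (k + 1) t)) (Icc 0 T) t)
    (hY : ∀ t ∈ Icc (0:ℝ) T, Filter.Tendsto (fun k => X k t) Filter.atTop (nhds (Y t))) :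
    (∀ t ∈ Icc (0:ℝ) T, Y t ∈ U) ∧ Y T = P ∧
      ∀ t ∈ Icc (0:ℝ) T, HasDerivWithinAt Y (H t (Y t) (Y t)) (Icc 0 T) t := by
  have hTm : T ∈ Icc (0:ℝ) T := ⟨hT.le, le_rfl⟩
  have hYU : ∀ t ∈ Icc (0:ℝ) T, Y t ∈ U := fun t ht =>
    hU.mem_of_tendsto (hY t ht) (Filter.Eventually.of_forall fun k => hXU k t ht)
  have hYT : Y T = P := by
    refine tendsto_nhds_unique (hY T hTm) ?_
    simp only [hXT]
    exact tendsto_const_nhds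
  have hY' : ∀ t ∈ Icc (0:ℝ) T,
      Filter.Tendsto (fun k => X (k + 1) t) Filter.atTop (nhds (Y t)) := fun t ht =>
    (hY t ht).comp (Filter.tendsto_add_atTop_nat 1)
  have hYc : ContinuousOn Y (Icc 0 T) := by
    have hlip : LipschitzOnWith (Real.toNNReal B) Y (Icc 0 T) := by
      refine LipschitzOnWith.of_dist_le_mul fun x hx y hy => ?_
      rw [dist_eq_norm, dist_eq_norm]
      refine le_of_tendsto (((hY' x hx).sub (hY' y hy)).norm)
        (Filter.Eventually.of_forall fun k => ?_)
      refine (convex_Icc (0:ℝ) T).norm_image_sub_le_of_norm_hasDerivWithin_le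
        (fun t ht => hX k t ht) ?_ hy hx
      intro t ht
      exact (hB t ht _ (hXU _ t ht) _ (hXU _ t ht)).trans (Real.le_coe_toNNReal B)
    exact hlip.continuousOn
  refine ⟨hYU, hYT, ?_⟩
  have hcontk : ∀ k, ContinuousOn (fun t => H t (X k t) (X (k + 1) t)) (Icc 0 T) := fun k =>
    hH.comp (f := fun t => (t, X k t, X (k + 1) t))
      (continuousOn_id.prodMk ((hXc k).prodMk (hXc (k + 1))))
      (fun t ht => ⟨ht, hXU _ t ht, hXU _ t ht⟩)
  have hpic : ∀ t ∈ Icc (0:ℝ) T, Y t = ODE.picard (fun t x => H t x x) T P Y t := by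
    intro t ht
    have hsub : uIcc T t ⊆ Icc 0 T := uIcc_subset_Icc hTm ht
    have hint : ∀ k, ∫ s in T..t, H s (X k s) (X (k + 1) s) = X (k + 1) t - P := by
      intro k
      rw [intervalIntegral.integral_eq_sub_of_hasDeriv_right
        (f := X (k + 1)) ((hXc (k + 1)).mono hsub) ?_ ?_, hXT]
      · intro s hs
        have hs1 : s ∈ Ioo t T := by
          rwa [min_eq_right ht.2, max_eq_left ht.2] at hs
        refine (hX k s ⟨ht.1.trans hs1.1.le, hs1.2.le⟩).mono_of_mem_nhdsWithin ?_
        exact Filter.mem_of_superset (Ioc_mem_nhdsGT hs1.2)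
          fun r hr => ⟨(ht.1.trans hs1.1.le).trans hr.1.le, hr.2⟩
      · exact ((hcontk k).mono hsub).intervalIntegrable
    have hlim : Filter.Tendsto (fun k => ∫ s in T..t, H s (X k s) (X (k + 1) s)) Filter.atTop
        (nhds (∫ s in T..t, H s (Y s) (Y s))) := by
      refine intervalIntegral.tendsto_integral_filter_of_dominated_convergence (fun _ => B)
        ?_ ?_ ?_ ?_
      · refine Filter.Eventually.of_forall fun k => ?_
        exact (((hcontk k).mono hsub).mono uIoc_subset_uIcc).aestronglyMeasurable
          measurableSet_uIoc
      · refine Filter.Eventually.of_forall fun k => Filter.Eventually.of_forall fun s hs => ?_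
        have hs' := hsub (uIoc_subset_uIcc hs)
        exact hB s hs' _ (hXU _ s hs') _ (hXU _ s hs')
      · exact intervalIntegrable_const
      · refine Filter.Eventually.of_forall fun s hs => ?_
        have hs' := hsub (uIoc_subset_uIcc hs)
        have h1 := hH (s, Y s, Y s) ⟨hs', hYU s hs', hYU s hs'⟩
        refine h1.tendsto.comp (f := fun k => (s, X k s, X (k + 1) s))
          (tendsto_nhdsWithin_iff.2 ⟨?_, ?_⟩)
        · exact tendsto_const_nhds.prodMk_nhds ((hY s hs').prodMk_nhds (hY' s hs'))
        · exact Filter.Eventually.of_forall fun k => ⟨hs', hXU _ s hs', hXU _ s hs'⟩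
    simp only [hint] at hlim
    have h2 := tendsto_nhds_unique hlim ((hY' t ht).sub_const P)
    rw [ODE.picard_apply, h2]
    abel
  intro t ht
  have h1 := ODE.hasDerivWithinAt_picard_Icc (f := fun t x => H t x x) (u := U) hTm
    (hH.comp (f := fun p : ℝ × E => (p.1, p.2, p.2)) (by fun_prop)
      (fun p hp => ⟨hp.1, hp.2, hp.2⟩)) hYc hYU P ht
  exact h1.congr hpic (hpic t ht)

lemma aux_G_cont {X m n : Type*} [Fintype m] [Fintype n] [DecidableEq n] [TopologicalSpace X]
    {s : Set X} (ρ : ℝ) {Q bx σx : X → Matrix n n ℝ} {b₁ σ₁ : X → Matrix n m ℝ}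
    {I : X → Matrix m n ℝ} {N : X → Matrix m m ℝ} {Θ : X → Matrix m n ℝ} {K : X → Matrix n n ℝ}
    (hQ : ContinuousOn Q s) (hbx : ContinuousOn bx s) (hσx : ContinuousOn σx s)
    (hb₁ : ContinuousOn b₁ s) (hσ₁ : ContinuousOn σ₁ s) (hI : ContinuousOn I s)
    (hN : ContinuousOn N s) (hΘ : ContinuousOn Θ s) (hK : ContinuousOn K s) :
    ContinuousOn (fun x => -(auxS (Q x) (I x) (N x) (Θ x) +
      auxL (auxA ρ (bx x) (b₁ x) (Θ x)) (auxC (σx x) (σ₁ x) (Θ x)) (K x))) s := by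
  simp only [auxS, auxL_apply, auxA, auxC]
  fun_prop

set_option maxHeartbeats 2000000 in
/-- Well-posedness of the matrix Riccati ODE for `K` (Step 6(i)): existence and uniqueness
(on `[0,T]`) of a bounded, continuously differentiable, positive-semidefinite symmetric
solution with terminal condition `K_T = P`. -/
theorem riccati_ODE_K_wellposed
    (d d₁ : ℕ) (hd : 1 ≤ d) (hd₁ : 1 ≤ d₁)
    (T ρ δ : ℝ) (hT : 0 < T) (hρ : 0 ≤ ρ) (hδ : 0 < δ)
    (Q bx σx : ℝ → Matrix (Fin d) (Fin d) ℝ)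
    (b₁ σ₁ : ℝ → Matrix (Fin d) (Fin d₁) ℝ)
    (I : ℝ → Matrix (Fin d₁) (Fin d) ℝ)
    (N : ℝ → Matrix (Fin d₁) (Fin d₁) ℝ)
    -- continuity of the coefficients on [0,T]
    (hQc : ContinuousOn Q (Icc 0 T)) (hbxc : ContinuousOn bx (Icc 0 T))
    (hσxc : ContinuousOn σx (Icc 0 T)) (hb₁c : ContinuousOn b₁ (Icc 0 T))
    (hσ₁c : ContinuousOn σ₁ (Icc 0 T)) (hIc : ContinuousOn I (Icc 0 T))
    (hNc : ContinuousOn N (Icc 0 T))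
    -- boundedness of the coefficients on [0,T]
    (hbdd : ∃ C : ℝ, ∀ t ∈ Icc (0 : ℝ) T,
      ‖Q t‖ ≤ C ∧ ‖bx t‖ ≤ C ∧ ‖σx t‖ ≤ C ∧ ‖b₁ t‖ ≤ C ∧ ‖σ₁ t‖ ≤ C ∧ ‖I t‖ ≤ C ∧ ‖N t‖ ≤ C)
    -- pointwise structural conditions
    (hQ : ∀ t ∈ Icc (0 : ℝ) T, (Q t).PosSemidef)
    (hN : ∀ t ∈ Icc (0 : ℝ) T, (N t).IsHermitian ∧
      (N t - δ • (1 : Matrix (Fin d₁) (Fin d₁) ℝ)).PosSemidef)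
    (hQI : ∀ t ∈ Icc (0 : ℝ) T, (Q t - (I t)ᵀ * (N t)⁻¹ * (I t)).PosSemidef)
    (P : Matrix (Fin d) (Fin d) ℝ) (hP : P.PosSemidef) :
    ∃ K : ℝ → Matrix (Fin d) (Fin d) ℝ,
      ((∀ t ∈ Icc (0 : ℝ) T, (K t).PosSemidef) ∧
        ContinuousOn K (Icc 0 T) ∧
        (∃ C : ℝ, ∀ t ∈ Icc (0 : ℝ) T, ‖K t‖ ≤ C) ∧
        K T = P ∧
        ∀ t ∈ Icc (0 : ℝ) T,
          HasDerivWithinAt K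
            (-(Q t + (σx t)ᵀ * K t * σx t + K t * bx t + (bx t)ᵀ * K t - ρ • K t -
              (I t + (σ₁ t)ᵀ * K t * σx t + (b₁ t)ᵀ * K t)ᵀ *
                (N t + (σ₁ t)ᵀ * K t * σ₁ t)⁻¹ *
                (I t + (σ₁ t)ᵀ * K t * σx t + (b₁ t)ᵀ * K t)))
            (Icc 0 T) t) ∧
      ∀ K' : ℝ → Matrix (Fin d) (Fin d) ℝ,
        ((∀ t ∈ Icc (0 : ℝ) T, (K' t).PosSemidef) ∧
          ContinuousOn K' (Icc 0 T) ∧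
          (∃ C : ℝ, ∀ t ∈ Icc (0 : ℝ) T, ‖K' t‖ ≤ C) ∧
          K' T = P ∧
          ∀ t ∈ Icc (0 : ℝ) T,
            HasDerivWithinAt K'
              (-(Q t + (σx t)ᵀ * K' t * σx t + K' t * bx t + (bx t)ᵀ * K' t - ρ • K' t -
                (I t + (σ₁ t)ᵀ * K' t * σx t + (b₁ t)ᵀ * K' t)ᵀ *
                  (N t + (σ₁ t)ᵀ * K' t * σ₁ t)⁻¹ *
                  (I t + (σ₁ t)ᵀ * K' t * σx t + (b₁ t)ᵀ * K' t)))
              (Icc 0 T) t) →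
        EqOn K' K (Icc 0 T) := by
  have hTm : T ∈ Icc (0:ℝ) T := ⟨hT.le, le_rfl⟩
  have hNpd : ∀ t ∈ Icc (0:ℝ) T, (N t).PosDef := fun t ht => aux_N_posDef _ δ hδ (hN t ht).2
  have hNs : ∀ t ∈ Icc (0:ℝ) T, (N t)ᵀ = N t := fun t ht =>
    (aux_psd_iff.1 (hNpd t ht).posSemidef).1
  have hRpd : ∀ t ∈ Icc (0:ℝ) T, ∀ K : Matrix (Fin d) (Fin d) ℝ, K.PosSemidef →
      (auxR (N t) (σ₁ t) K).PosDef := fun t ht K hK => aux_R_posDef _ (hNpd t ht) _ _ hK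
  -- Riccati field, cost of a feedback, optimal feedback
  set ric : ℝ → Matrix (Fin d) (Fin d) ℝ → Matrix (Fin d) (Fin d) ℝ := fun t K =>
    Q t + (σx t)ᵀ * K * σx t + K * bx t + (bx t)ᵀ * K - ρ • K -
              (I t + (σ₁ t)ᵀ * K * σx t + (b₁ t)ᵀ * K)ᵀ *
                (N t + (σ₁ t)ᵀ * K * σ₁ t)⁻¹ *
                (I t + (σ₁ t)ᵀ * K * σx t + (b₁ t)ᵀ * K) with hric
  set G : ℝ → Matrix (Fin d₁) (Fin d) ℝ → Matrix (Fin d) (Fin d) ℝ → Matrix (Fin d) (Fin d) ℝ :=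
    fun t Θ K => auxS (Q t) (I t) (N t) Θ +
      auxL (auxA ρ (bx t) (b₁ t) Θ) (auxC (σx t) (σ₁ t) Θ) K with hG
  set Th : ℝ → Matrix (Fin d) (Fin d) ℝ → Matrix (Fin d₁) (Fin d) ℝ := fun t K =>
    -((auxR (N t) (σ₁ t) K)⁻¹ * auxM (I t) (σx t) (b₁ t) (σ₁ t) K) with hTh
  have hGeq : ∀ t ∈ Icc (0:ℝ) T, ∀ K : Matrix (Fin d) (Fin d) ℝ, K.PosSemidef →
      ∀ Θ, G t Θ K = ric t K + (Θ - Th t K)ᵀ * auxR (N t) (σ₁ t) K * (Θ - Th t K) := by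
    intro t ht K hK Θ
    simp only [hTh, sub_neg_eq_add]
    exact aux_cost_eq ρ _ _ _ _ _ _ _ Θ K (aux_psd_iff.1 hK).1 (hNs t ht)
      (hRpd t ht K hK).isUnit
  have hGopt : ∀ t ∈ Icc (0:ℝ) T, ∀ K : Matrix (Fin d) (Fin d) ℝ, K.PosSemidef →
      G t (Th t K) K = ric t K := by
    intro t ht K hK
    rw [hGeq t ht K hK]
    simp
  have hGge : ∀ t ∈ Icc (0:ℝ) T, ∀ K : Matrix (Fin d) (Fin d) ℝ, K.PosSemidef →
      ∀ Θ, (G t Θ K - ric t K).PosSemidef := by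
    intro t ht K hK Θ
    rw [hGeq t ht K hK, add_sub_cancel_left]
    exact aux_psd_conj (hRpd t ht K hK).posSemidef _
  have hSpsd : ∀ t ∈ Icc (0:ℝ) T, ∀ Θ, (auxS (Q t) (I t) (N t) Θ).PosSemidef :=
    fun t ht Θ => auxS_psd _ _ _ (hNpd t ht) (hQI t ht) Θ
  -- continuity
  have hAc : ∀ Θ : ℝ → Matrix (Fin d₁) (Fin d) ℝ, ContinuousOn Θ (Icc 0 T) →
      ContinuousOn (fun t => auxA ρ (bx t) (b₁ t) (Θ t)) (Icc 0 T) := by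
    intro Θ hΘ
    simp only [auxA]
    fun_prop
  have hCc : ∀ Θ : ℝ → Matrix (Fin d₁) (Fin d) ℝ, ContinuousOn Θ (Icc 0 T) →
      ContinuousOn (fun t => auxC (σx t) (σ₁ t) (Θ t)) (Icc 0 T) := by
    intro Θ hΘ
    simp only [auxC]
    fun_prop
  have hSc : ∀ Θ : ℝ → Matrix (Fin d₁) (Fin d) ℝ, ContinuousOn Θ (Icc 0 T) →
      ContinuousOn (fun t => auxS (Q t) (I t) (N t) (Θ t)) (Icc 0 T) := by
    intro Θ hΘ
    simp only [auxS]
    fun_prop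
  have hThc : ContinuousOn (fun p : ℝ × Matrix (Fin d) (Fin d) ℝ => Th p.1 p.2)
      (Icc 0 T ×ˢ {K | K.PosSemidef}) := by
    have h1 : ContinuousOn (fun p : ℝ × Matrix (Fin d) (Fin d) ℝ =>
        (auxR (N p.1) (σ₁ p.1) p.2)⁻¹) (Icc 0 T ×ˢ {K | K.PosSemidef}) := by
      refine aux_contOn_inv ?_ fun p hp => (hRpd p.1 hp.1 p.2 hp.2).isUnit
      simp only [auxR]
      fun_prop (disch := exact fun p hp => hp.1)
    have h2 : ContinuousOn (fun p : ℝ × Matrix (Fin d) (Fin d) ℝ =>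
        auxM (I p.1) (σx p.1) (b₁ p.1) (σ₁ p.1) p.2) (Icc 0 T ×ˢ {K | K.PosSemidef}) := by
      simp only [auxM]
      fun_prop (disch := exact fun p hp => hp.1)
    exact (aux_contOn_mul h1 h2).neg
  -- comparison principle
  have hcmp : ∀ (Θ : ℝ → Matrix (Fin d₁) (Fin d) ℝ)
      (K₁ K₂ f₁ f₂ : ℝ → Matrix (Fin d) (Fin d) ℝ), ContinuousOn Θ (Icc 0 T) →
      K₁ T = K₂ T → (∀ t ∈ Icc (0:ℝ) T, (K₁ t).PosSemidef) →
      (∀ t ∈ Icc (0:ℝ) T, (K₂ t).PosSemidef) →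
      (∀ t ∈ Icc (0:ℝ) T, HasDerivWithinAt K₁ (-(f₁ t)) (Icc 0 T) t) →
      (∀ t ∈ Icc (0:ℝ) T, HasDerivWithinAt K₂ (-(f₂ t)) (Icc 0 T) t) →
      (∀ t ∈ Icc (0:ℝ) T, (f₁ t - G t (Θ t) (K₁ t)).PosSemidef) →
      (∀ t ∈ Icc (0:ℝ) T, (G t (Θ t) (K₂ t) - f₂ t).PosSemidef) →
      ∀ t ∈ Icc (0:ℝ) T, (K₁ t - K₂ t).PosSemidef := by
    intro Θ K₁ K₂ f₁ f₂ hΘ hTT hp1 hp2 hd1 hd2 hf1 hf2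
    refine aux_pos T hT _ _ (fun t => (f₁ t - G t (Θ t) (K₁ t)) + (G t (Θ t) (K₂ t) - f₂ t))
      (fun t => K₁ t - K₂ t) (hAc Θ hΘ) (hCc Θ hΘ) ?_ ?_ ?_ ?_
    · exact fun t ht => (hf1 t ht).add (hf2 t ht)
    · intro t ht
      rw [transpose_sub, (aux_psd_iff.1 (hp1 t ht)).1, (aux_psd_iff.1 (hp2 t ht)).1]
    · rw [hTT, sub_self]
      exact PosSemidef.zero
    · intro t ht
      refine ((hd1 t ht).sub (hd2 t ht)).congr_deriv ?_
      simp only [hG, map_sub]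
      abel
  -- one step of policy iteration
  have hstep : ∀ Θ : ℝ → Matrix (Fin d₁) (Fin d) ℝ, ∃ K : ℝ → Matrix (Fin d) (Fin d) ℝ,
      ContinuousOn Θ (Icc 0 T) → K T = P ∧ (∀ t ∈ Icc (0:ℝ) T, (K t).PosSemidef) ∧
        ∀ t ∈ Icc (0:ℝ) T, HasDerivWithinAt K (-(G t (Θ t) (K t))) (Icc 0 T) t := by
    intro Θ
    by_cases hΘ : ContinuousOn Θ (Icc 0 T)
    · obtain ⟨X, hXT, hXs, hX⟩ := aux_lyap_exist T hT _ _ _ (hAc Θ hΘ) (hCc Θ hΘ) (hSc Θ hΘ)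
        (fun t ht => (aux_psd_iff.1 (hSpsd t ht _)).1) P (aux_psd_iff.1 hP).1
      refine ⟨X, fun _ => ⟨hXT, ?_, hX⟩⟩
      exact aux_pos T hT _ _ _ X (hAc Θ hΘ) (hCc Θ hΘ) (fun t ht => hSpsd t ht _)
        (fun t _ => hXs t) (hXT ▸ hP) hX
    · exact ⟨0, fun h => absurd h hΘ⟩
  choose sol hsol using hstep
  set X : ℕ → ℝ → Matrix (Fin d) (Fin d) ℝ := fun k =>
    Nat.rec (sol 0) (fun _ K => sol (fun t => Th t (K t))) k with hXdef
  have hXs : ∀ k, X (k + 1) = sol (fun t => Th t (X k t)) := fun k => rfl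
  have hThK : ∀ K : ℝ → Matrix (Fin d) (Fin d) ℝ, ContinuousOn K (Icc 0 T) →
      (∀ t ∈ Icc (0:ℝ) T, (K t).PosSemidef) →
      ContinuousOn (fun t => Th t (K t)) (Icc 0 T) := fun K hK hp =>
    hThc.comp (f := fun t => (t, K t)) (continuousOn_id.prodMk hK) (fun t ht => ⟨ht, hp t ht⟩)
  have hXall : ∀ k, ∃ Θ : ℝ → Matrix (Fin d₁) (Fin d) ℝ, X k T = P ∧
      (∀ t ∈ Icc (0:ℝ) T, (X k t).PosSemidef) ∧
        ∀ t ∈ Icc (0:ℝ) T, HasDerivWithinAt (X k) (-(G t (Θ t) (X k t))) (Icc 0 T) t := by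
    intro k
    induction k with
    | zero => exact ⟨0, hsol 0 continuousOn_const⟩
    | succ k ih =>
      obtain ⟨Θ, h1, h2, h3⟩ := ih
      exact ⟨_, hsol _ (hThK (X k) (fun t ht => (h3 t ht).continuousWithinAt) h2)⟩
  choose Ψ hXT hXp hXd using hXall
  have hXc : ∀ k, ContinuousOn (X k) (Icc 0 T) := fun k t ht => (hXd k t ht).continuousWithinAt
  have hXd' : ∀ k, ∀ t ∈ Icc (0:ℝ) T,
      HasDerivWithinAt (X (k + 1)) (-(G t (Th t (X k t)) (X (k + 1) t))) (Icc 0 T) t := fun k =>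
    (hsol _ (hThK (X k) (hXc k) (hXp k))).2.2
  clear_value X
  have hmono : ∀ k, ∀ t ∈ Icc (0:ℝ) T, (X k t - X (k + 1) t).PosSemidef := by
    intro k
    refine hcmp (fun t => Th t (X k t)) _ _ (fun t => G t (Ψ k t) (X k t)) _
      (hThK (X k) (hXc k) (hXp k)) ((hXT k).trans (hXT (k + 1)).symm) (hXp k) (hXp (k + 1)) (hXd k)
      (hXd' k) ?_ ?_
    · intro t ht
      rw [hGopt t ht _ (hXp k t ht)]
      exact hGge t ht _ (hXp k t ht) _
    · intro t ht
      rw [sub_self]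
      exact PosSemidef.zero
  obtain ⟨C, hC⟩ := isCompact_Icc.exists_bound_of_continuousOn (hXc 0)
  have hXC : ∀ k, ∀ t ∈ Icc (0:ℝ) T, ‖X k t‖ ≤ C := by
    intro k t ht
    induction k with
    | zero => exact hC t ht
    | succ k ih => exact (aux_psd_norm _ _ (hXp (k + 1) t ht) (hmono k t ht)).trans ih
  have hlim : ∀ t, ∃ B, t ∈ Icc (0:ℝ) T →
      Filter.Tendsto (fun k => X k t) Filter.atTop (nhds B) := by
    intro t
    by_cases ht : t ∈ Icc (0:ℝ) T
    · obtain ⟨B, hB⟩ := aux_psd_tendsto (fun k => X k t) (fun k => hXp k t ht)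
        (fun k => hmono k t ht)
      exact ⟨B, fun _ => hB⟩
    · exact ⟨0, fun h => absurd h ht⟩
  choose Y hY using hlim
  set U : Set (Matrix (Fin d) (Fin d) ℝ) := {K | K.PosSemidef} ∩ Metric.closedBall 0 C with hU
  have hUc : IsCompact U := (isCompact_closedBall _ _).inter_left aux_psd_closed
  have hHc : ContinuousOn (fun p : ℝ × Matrix (Fin d) (Fin d) ℝ × Matrix (Fin d) (Fin d) ℝ =>
      -(G p.1 (Th p.1 p.2.1) p.2.2)) (Icc 0 T ×ˢ U ×ˢ U) := by
    have h1 : ContinuousOn (fun p : ℝ × Matrix (Fin d) (Fin d) ℝ × Matrix (Fin d) (Fin d) ℝ =>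
        Th p.1 p.2.1) (Icc 0 T ×ˢ U ×ˢ U) :=
      hThc.comp (f := fun p : ℝ × Matrix (Fin d) (Fin d) ℝ × Matrix (Fin d) (Fin d) ℝ =>
        (p.1, p.2.1)) (by fun_prop) (fun p hp => ⟨hp.1, hp.2.1.1⟩)
    have hlift : ∀ {a b : ℕ} {F : ℝ → Matrix (Fin a) (Fin b) ℝ}, ContinuousOn F (Icc 0 T) →
        ContinuousOn (fun p : ℝ × Matrix (Fin d) (Fin d) ℝ × Matrix (Fin d) (Fin d) ℝ => F p.1)
          (Icc 0 T ×ˢ U ×ˢ U) := fun hF => hF.comp continuousOn_fst fun p hp => hp.1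
    exact aux_G_cont ρ (hlift hQc) (hlift hbxc) (hlift hσxc) (hlift hb₁c) (hlift hσ₁c) (hlift hIc)
      (hlift hNc) h1 (by fun_prop)
  obtain ⟨B, hB⟩ := (isCompact_Icc.prod (hUc.prod hUc)).exists_bound_of_continuousOn hHc
  obtain ⟨hYU, hYT, hYd⟩ := aux_limit T hT U hUc.isClosed (fun t K L => -(G t (Th t K) L)) hHc B
    (fun t ht x hx y hy => hB (t, x, y) ⟨ht, hx, hy⟩) P X Y
    (fun k t ht => ⟨hXp k t ht, by simpa using hXC k t ht⟩) hXT hXc hXd' hY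
  have hYp : ∀ t ∈ Icc (0:ℝ) T, (Y t).PosSemidef := fun t ht => (hYU t ht).1
  have hYd' : ∀ t ∈ Icc (0:ℝ) T, HasDerivWithinAt Y (-(ric t (Y t))) (Icc 0 T) t := by
    intro t ht
    rw [← hGopt t ht _ (hYp t ht)]
    exact hYd t ht
  have hYc : ContinuousOn Y (Icc 0 T) := fun t ht => (hYd t ht).continuousWithinAt
  -- comparison of two solutions
  have huniq : ∀ K₁ K₂ : ℝ → Matrix (Fin d) (Fin d) ℝ, K₁ T = K₂ T →
      (∀ t ∈ Icc (0:ℝ) T, (K₁ t).PosSemidef) → (∀ t ∈ Icc (0:ℝ) T, (K₂ t).PosSemidef) →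
      (∀ t ∈ Icc (0:ℝ) T, HasDerivWithinAt K₁ (-(ric t (K₁ t))) (Icc 0 T) t) →
      (∀ t ∈ Icc (0:ℝ) T, HasDerivWithinAt K₂ (-(ric t (K₂ t))) (Icc 0 T) t) →
      ∀ t ∈ Icc (0:ℝ) T, (K₁ t - K₂ t).PosSemidef := by
    intro K₁ K₂ hTT hp1 hp2 hd1 hd2
    refine hcmp (fun t => Th t (K₁ t)) K₁ K₂ _ _
      (hThK K₁ (fun t ht => (hd1 t ht).continuousWithinAt) hp1) hTT hp1 hp2 hd1 hd2 ?_ ?_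
    · intro t ht
      rw [hGopt t ht _ (hp1 t ht), sub_self]
      exact PosSemidef.zero
    · intro t ht
      exact hGge t ht _ (hp2 t ht) _
  refine ⟨Y, ⟨hYp, hYc, isCompact_Icc.exists_bound_of_continuousOn hYc, hYT, hYd'⟩, ?_⟩
  rintro K' ⟨hp, -, -, hKT, hKd⟩ t ht
  have h1 := huniq K' Y (hKT.trans hYT.symm) hp hYp hKd hYd' t ht
  have h2 := huniq Y K' (hYT.trans hKT.symm) hYp hp hYd' hKd t ht
  have h3 : ‖K' t - Y t‖ ≤ ‖(0 : Matrix (Fin d) (Fin d) ℝ)‖ := by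
    refine aux_psd_norm _ _ h1 ?_
    rw [zero_sub, neg_sub]
    exact h2
  rw [norm_zero] at h3
  exact sub_eq_zero.1 (norm_le_zero_iff.1 h3)
end

section
/- Well-posedness of the matrix Riccati ODE for Λ given K (Step 6(ii)): Let T > 0, ρ ≥ 0, δ > 0, and let K : [0,T] → S^d be continuous, bounded, with positive semidefinite values. Let Q̂ : [0,T] → S^d, b̂ₓ, σ̂ₓ : [0,T] → ℝ^{d×d}, b̂₁, σ̂₁ : [0,T] → ℝ^{d×d₁}, Î : [0,T] → ℝ^{d₁×d}, N̂ : [0,T] → S^{d₁} be continuous and bounded with, for every t ∈ [0,T]: Q̂_t positive semidefinite, N̂_t ⪰ δ I_{d₁}, and Q̂_t − Î_tᵀ N̂_t⁻¹ Î_t positive semidefinite. Let P̂ be a symmetric positive semidefinite d × d matrix. Then there exists a unique bounded continuously differentiable map Λ : [0,T] → S^d, taking positive semidefinite values, such that Λ_T = P̂ and for every t ∈ [0,T]: Λ′_t + Q̂_t + σ̂ₓ,ᵗᵀ K_t σ̂ₓ,ᵗ + Λ_t b̂ₓ,ᵗ + b̂ₓ,ᵗᵀ Λ_t − ρ Λ_t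 − (Î_t + σ̂₁,ᵗᵀ K_t σ̂ₓ,ᵗ + b̂₁,ᵗᵀ Λ_t)ᵀ (N̂_t + σ̂₁,ᵗᵀ K_t σ̂₁,ᵗ)⁻¹ (Î_t + σ̂₁,ᵗᵀ K_t σ̂ₓ,ᵗ + b̂₁,ᵗᵀ Λ_t) = 0. -/
open Matrix Set

attribute [local instance] Matrix.normedAddCommGroup Matrix.normedSpace

section helpers

set_option linter.unusedSectionVars false

variable {l m n : Type*} [Fintype l] [Fintype m] [Fintype n]

/-- Submultiplicativity up to a constant of the entrywise sup norm. -/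
lemma ric_norm_mul_le (A : Matrix l m ℝ) (B : Matrix m n ℝ) :
    ‖A * B‖ ≤ (Fintype.card m : ℝ) * ‖A‖ * ‖B‖ := by
  rw [Matrix.norm_le_iff (by positivity)]
  intro i j
  rw [Matrix.mul_apply]
  calc ‖∑ k, A i k * B k j‖ ≤ ∑ k : m, ‖A i k * B k j‖ := norm_sum_le _ _
    _ ≤ ∑ _k : m, ‖A‖ * ‖B‖ := by
        refine Finset.sum_le_sum fun k _ => ?_
        rw [norm_mul]
        exact mul_le_mul (Matrix.norm_entry_le_entrywise_sup_norm A)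
          (Matrix.norm_entry_le_entrywise_sup_norm B) (norm_nonneg _) (norm_nonneg _)
    _ = _ := by simp [mul_assoc]

lemma ric_hasDeriv_iff {f : ℝ → Matrix m n ℝ} {f' : Matrix m n ℝ} {s : Set ℝ} {t : ℝ} :
    HasDerivWithinAt f f' s t ↔ ∀ i j, HasDerivWithinAt (fun x => f x i j) (f' i j) s t := by
  refine (hasDerivWithinAt_pi (φ := f) (φ' := f')).trans ?_
  refine forall_congr' fun i => ?_
  exact hasDerivWithinAt_pi (φ := fun x => f x i) (φ' := f' i)

lemma ric_hasDeriv_mul {f : ℝ → Matrix l m ℝ} {g : ℝ → Matrix m n ℝ} {f' : Matrix l m ℝ}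
    {g' : Matrix m n ℝ} {s : Set ℝ} {t : ℝ} (hf : HasDerivWithinAt f f' s t)
    (hg : HasDerivWithinAt g g' s t) :
    HasDerivWithinAt (fun x => f x * g x) (f' * g t + f t * g') s t := by
  rw [ric_hasDeriv_iff] at *
  intro i j
  simp only [Matrix.mul_apply, Matrix.add_apply, ← Finset.sum_add_distrib]
  exact HasDerivWithinAt.fun_sum fun k _ => (hf i k).mul (hg k j)

lemma ric_hasDeriv_transpose {f : ℝ → Matrix l m ℝ} {f' : Matrix l m ℝ}
    {s : Set ℝ} {t : ℝ} (hf : HasDerivWithinAt f f' s t) :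
    HasDerivWithinAt (fun x => (f x)ᵀ) f'ᵀ s t := by
  rw [ric_hasDeriv_iff] at *
  exact fun i j => hf j i

lemma ric_continuousOn_inv [DecidableEq n] {U : ℝ → Matrix n n ℝ} {s : Set ℝ}
    (hU : ContinuousOn U s) (hu : ∀ x ∈ s, IsUnit (U x).det) :
    ContinuousOn (fun x => (U x)⁻¹) s := by
  intro x hx
  have h1 : ContinuousAt Ring.inverse (U x).det := by
    have : (Ring.inverse : ℝ → ℝ) = fun y => y⁻¹ := by
      funext y; exact Ring.inverse_eq_inv y
    rw [this]
    exact continuousAt_inv₀ (hu x hx).ne_zero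
  exact (continuousAt_matrix_inv (U x) h1).comp_continuousWithinAt (hU x hx)

lemma ric_hasDeriv_inv [DecidableEq n] {U : ℝ → Matrix n n ℝ} {U' : Matrix n n ℝ} {s : Set ℝ}
    {t : ℝ} (ht : t ∈ s) (hc : ContinuousOn U s) (hU : HasDerivWithinAt U U' s t)
    (hu : ∀ x ∈ s, IsUnit (U x).det) :
    HasDerivWithinAt (fun x => (U x)⁻¹) (-((U t)⁻¹ * U' * (U t)⁻¹)) s t := by
  replace hU := hasDerivWithinAt_iff_tendsto_slope.mp hU
  refine hasDerivWithinAt_iff_tendsto_slope.mpr ?_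
  have h1 : Filter.Tendsto (fun x => (U x)⁻¹) (nhdsWithin t (s \ {t})) (nhds (U t)⁻¹) :=
    ((ric_continuousOn_inv hc hu) t ht).mono_left (nhdsWithin_mono _ sdiff_subset)
  have h2 := ((h1.mul hU).mul (tendsto_const_nhds (x := (U t)⁻¹))).neg
  refine h2.congr' ?_
  filter_upwards [self_mem_nhdsWithin] with x hx
  simp only [slope, vsub_eq_sub]
  have e1 := Matrix.nonsing_inv_mul _ (hu x hx.1)
  have e2 := Matrix.mul_nonsing_inv _ (hu t ht)
  rw [Matrix.mul_smul, Matrix.smul_mul, ← smul_neg]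
  congr 1
  rw [Matrix.mul_sub, Matrix.sub_mul, e1, Matrix.mul_assoc (U x)⁻¹ (U t), e2]
  simp

/-- Entrywise truncation. -/
noncomputable def ricClamp (r : ℝ) (Y : Matrix m n ℝ) : Matrix m n ℝ :=
  Matrix.of fun i j => max (-r) (min r (Y i j))

lemma ricClamp_norm_le {r : ℝ} (hr : 0 ≤ r) (Y : Matrix m n ℝ) : ‖ricClamp r Y‖ ≤ r := by
  rw [Matrix.norm_le_iff hr]
  intro i j
  rw [Real.norm_eq_abs, abs_le]
  simp only [ricClamp, Matrix.of_apply]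
  exact ⟨le_max_left _ _, max_le (by linarith) (min_le_left _ _)⟩

lemma ricClamp_sub {r : ℝ} (Y Z : Matrix m n ℝ) :
    ‖ricClamp r Y - ricClamp r Z‖ ≤ ‖Y - Z‖ := by
  rw [Matrix.norm_le_iff (norm_nonneg _)]
  intro i j
  refine le_trans ?_ (Matrix.norm_entry_le_entrywise_sup_norm (Y - Z) (i := i) (j := j))
  simp only [ricClamp, Matrix.of_apply, Matrix.sub_apply, Real.norm_eq_abs]
  refine (abs_max_sub_max_le_max _ _ _ _).trans ?_
  refine max_le (by simp) ((abs_min_sub_min_le_max _ _ _ _).trans (max_le (by simp) le_rfl))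

lemma ricClamp_zero {r : ℝ} (hr : 0 ≤ r) : ricClamp r (0 : Matrix m n ℝ) = 0 := by
  ext i j
  simp [ricClamp, hr]

lemma ricClamp_self {r : ℝ} {Y : Matrix m n ℝ} (h : ‖Y‖ ≤ r) : ricClamp r Y = Y := by
  ext i j
  have := (Matrix.norm_entry_le_entrywise_sup_norm Y (i := i) (j := j)).trans h
  rw [Real.norm_eq_abs, abs_le] at this
  simp only [ricClamp, Matrix.of_apply]
  rw [min_eq_right this.2, max_eq_right this.1]

lemma ric_lin_ode {T : ℝ} (hT : 0 < T) (L : ℝ → Matrix m m ℝ) (hL : ContinuousOn L (Icc 0 T))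
    (Y0 : Matrix m n ℝ) :
    ∃ Y : ℝ → Matrix m n ℝ, Y 0 = Y0 ∧
      ∀ t ∈ Icc 0 T, HasDerivWithinAt Y (L t * Y t) (Icc 0 T) t := by
  obtain ⟨C, hC⟩ := isCompact_Icc.exists_bound_of_continuousOn hL
  have hC0 : 0 ≤ C := (norm_nonneg _).trans (hC 0 ⟨le_rfl, hT.le⟩)
  set c : ℝ := Fintype.card m * C with hc
  have hc0 : 0 ≤ c := by positivity
  have hLm : ∀ t ∈ Icc 0 T, ∀ Z : Matrix m n ℝ, ‖L t * Z‖ ≤ c * ‖Z‖ := by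
    intro t ht Z
    refine (ric_norm_mul_le _ _).trans ?_
    have := hC t ht
    rw [hc]
    gcongr
  set r : ℝ := ‖Y0‖ * Real.exp (c * T) with hr
  have hr0 : 0 ≤ r := by positivity
  set f : ℝ → Matrix m n ℝ → Matrix m n ℝ := fun t Y => L t * ricClamp r Y with hf
  have hPL : IsPicardLindelof f (tmin := 0) (tmax := T) ⟨0, le_rfl, hT.le⟩ Y0
      (Real.toNNReal (c * r * T)) 0 (Real.toNNReal (c * r)) (Real.toNNReal c) := by
    constructor
    · intro t ht
      refine LipschitzWith.lipschitzOnWith (LipschitzWith.of_dist_le_mul fun x y => ?_)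
      rw [dist_eq_norm, dist_eq_norm, Real.coe_toNNReal _ hc0, hf]
      simp only
      rw [← Matrix.mul_sub]
      refine (hLm t ht _).trans ?_
      gcongr
      exact ricClamp_sub x y
    · intro x _
      exact (Continuous.matrix_mul continuous_id continuous_const).comp_continuousOn hL
    · intro t ht x _
      rw [Real.coe_toNNReal _ (by positivity)]
      refine (hLm t ht _).trans ?_
      gcongr
      exact ricClamp_norm_le hr0 x
    · rw [Real.coe_toNNReal _ (by positivity), Real.coe_toNNReal _ (by positivity)]
      simp [hT.le]
  obtain ⟨Y, hY0, hY⟩ := hPL.exists_eq_forall_mem_Icc_hasDerivWithinAt₀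
  refine ⟨Y, hY0, fun t ht => ?_⟩
  have hcont : ContinuousOn Y (Icc 0 T) := fun t ht => (hY t ht).continuousWithinAt
  have hb := norm_le_gronwallBound_of_norm_deriv_right_le (f := Y) (f' := fun t => f t (Y t))
    (δ := ‖Y0‖) (K := c) (ε := 0) hcont
    (fun x hx => (hY x ⟨hx.1, hx.2.le⟩).mono_of_mem_nhdsWithin
      (Icc_mem_nhdsGE_of_mem hx)) (by rw [← hY0])
    (fun x hx => by
      rw [add_zero]
      refine (hLm x ⟨hx.1, hx.2.le⟩ _).trans ?_
      gcongr
      have := ricClamp_sub (r := r) (Y x) 0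
      rwa [ricClamp_zero hr0, sub_zero, sub_zero] at this) t ht
  rw [gronwallBound_ε0, sub_zero] at hb
  have hb2 : ‖Y t‖ ≤ r := hb.trans (by rw [hr]; gcongr; exact ht.2)
  have := hY t ht
  simp only [hf, ricClamp_self hb2] at this
  exact this

lemma ric_lin_ode_term {T : ℝ} (hT : 0 < T) (L : ℝ → Matrix m m ℝ)
    (hL : ContinuousOn L (Icc 0 T)) (Y0 : Matrix m n ℝ) :
    ∃ Y : ℝ → Matrix m n ℝ, Y T = Y0 ∧
      ∀ t ∈ Icc 0 T, HasDerivWithinAt Y (L t * Y t) (Icc 0 T) t := by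
  have hmap : MapsTo (fun t : ℝ => T - t) (Icc 0 T) (Icc 0 T) := fun t ht =>
    ⟨by linarith [ht.2], by linarith [ht.1]⟩
  obtain ⟨Y, h0, hY⟩ := ric_lin_ode hT (fun s => -L (T - s))
    ((hL.comp (by fun_prop) hmap).neg) Y0
  refine ⟨fun t => Y (T - t), by simpa using h0, fun t ht => ?_⟩
  have h1 : HasDerivWithinAt (fun t : ℝ => T - t) (-1) (Icc 0 T) t := by
    simpa using (hasDerivWithinAt_id t (Icc 0 T)).const_sub T
  have := (hY (T - t) (hmap ht)).scomp t h1 hmap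
  simp [Function.comp_def] at this
  exact this

/-- Gronwall: zero at the left endpoint. -/
lemma ric_zero_fwd {E : Type*} [NormedAddCommGroup E] [NormedSpace ℝ E] {a b C : ℝ}
    {y y' : ℝ → E} (hy : ∀ t ∈ Icc a b, HasDerivWithinAt y (y' t) (Icc a b) t)
    (hC : ∀ t ∈ Icc a b, ‖y' t‖ ≤ C * ‖y t‖) (h0 : y a = 0) : ∀ t ∈ Icc a b, y t = 0 := by
  intro t ht
  have hb := norm_le_gronwallBound_of_norm_deriv_right_le (f := y) (f' := y')
    (δ := 0) (K := C) (ε := 0) (fun t ht => (hy t ht).continuousWithinAt)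
    (fun x hx => (hy x ⟨hx.1, hx.2.le⟩).mono_of_mem_nhdsWithin
      (Icc_mem_nhdsGE_of_mem hx)) (by simp [h0])
    (fun x hx => by simpa using hC x ⟨hx.1, hx.2.le⟩) t ht
  rw [gronwallBound_ε0_δ0] at hb
  exact norm_le_zero_iff.mp hb

lemma ric_zero_bwd {E : Type*} [NormedAddCommGroup E] [NormedSpace ℝ E] {T C : ℝ}
    {y y' : ℝ → E} (hy : ∀ t ∈ Icc 0 T, HasDerivWithinAt y (y' t) (Icc 0 T) t)
    (hC : ∀ t ∈ Icc 0 T, ‖y' t‖ ≤ C * ‖y t‖) (h0 : y T = 0) : ∀ t ∈ Icc 0 T, y t = 0 := by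
  have hmap : MapsTo (fun t : ℝ => T - t) (Icc 0 T) (Icc 0 T) := fun t ht =>
    ⟨by linarith [ht.2], by linarith [ht.1]⟩
  have := ric_zero_fwd (a := 0) (b := T) (C := C) (y := fun t => y (T - t))
    (y' := fun t => -y' (T - t)) (fun t ht => by
      have h1 : HasDerivWithinAt (fun t : ℝ => T - t) (-1) (Icc 0 T) t := by
        simpa using (hasDerivWithinAt_id t (Icc 0 T)).const_sub T
      have := (hy (T - t) (hmap ht)).scomp t h1 hmap
      simpa [Function.comp_def] using this)
    (fun t ht => by simpa using hC _ (hmap ht)) (by simpa using h0)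
  intro t ht
  simpa using this _ (hmap ht)

end helpers

section riccati

variable {n : Type*} [Fintype n] [DecidableEq n]

/-- The linear Hamiltonian system. -/
lemma ric_hamiltonian {T : ℝ} (hT : 0 < T) (A H R : ℝ → Matrix n n ℝ)
    (hA : ContinuousOn A (Icc 0 T)) (hH : ContinuousOn H (Icc 0 T))
    (hR : ContinuousOn R (Icc 0 T)) (P : Matrix n n ℝ) :
    ∃ U V : ℝ → Matrix n n ℝ, U T = 1 ∧ V T = P ∧
      (∀ t ∈ Icc 0 T, HasDerivWithinAt U (A t * U t - R t * V t) (Icc 0 T) t) ∧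
      (∀ t ∈ Icc 0 T, HasDerivWithinAt V (-(H t * U t) - (A t)ᵀ * V t) (Icc 0 T) t) := by
  obtain ⟨Y, hYT, hY⟩ := ric_lin_ode_term hT
    (fun t => fromBlocks (A t) (-R t) (-H t) (-(A t)ᵀ)) (by
      have e : ∀ {F : ℝ → Matrix n n ℝ}, ContinuousOn F (Icc 0 T) → ∀ i j,
          ContinuousOn (fun t => F t i j) (Icc 0 T) := fun hF i j =>
        (continuous_apply_apply i j).comp_continuousOn hF
      refine continuousOn_pi.2 fun i => continuousOn_pi.2 fun j => ?_
      rcases i with i | i <;> rcases j with j | j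
      · exact e hA i j
      · exact (e hR i j).neg
      · exact (e hH i j).neg
      · exact (e hA j i).neg) (fromRows (1 : Matrix n n ℝ) P)
  refine ⟨fun t => (Y t).toRows₁, fun t => (Y t).toRows₂, ?_, ?_, fun t ht => ?_, fun t ht => ?_⟩
  · simp [hYT]
  · simp [hYT]
  · have h := hY t ht
    rw [ric_hasDeriv_iff] at h ⊢
    intro i j
    have := h (Sum.inl i) j
    rw [← fromRows_toRows (Y t), fromBlocks_mul_fromRows] at this
    simpa [sub_eq_add_neg, Matrix.neg_mul] using this
  · have h := hY t ht
    rw [ric_hasDeriv_iff] at h ⊢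
    intro i j
    have := h (Sum.inr i) j
    rw [← fromRows_toRows (Y t), fromBlocks_mul_fromRows] at this
    simpa [sub_eq_add_neg, Matrix.neg_mul] using this

lemma ric_exists {T : ℝ} (hT : 0 < T) (A H R : ℝ → Matrix n n ℝ)
    (hA : ContinuousOn A (Icc 0 T)) (hH : ContinuousOn H (Icc 0 T))
    (hR : ContinuousOn R (Icc 0 T)) (hHp : ∀ t ∈ Icc 0 T, (H t).PosSemidef)
    (hRp : ∀ t ∈ Icc 0 T, (R t).PosSemidef) (P : Matrix n n ℝ) (hP : P.PosSemidef) :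
    ∃ X : ℝ → Matrix n n ℝ, (∀ t ∈ Icc 0 T, (X t).PosSemidef) ∧ X T = P ∧
      ∀ t ∈ Icc 0 T, HasDerivWithinAt X
        (-(H t + X t * A t + (A t)ᵀ * X t - X t * R t * X t)) (Icc 0 T) t := by
  obtain ⟨U, V, hUT, hVT, hU, hV⟩ := ric_hamiltonian hT A H R hA hH hR P
  have hTm : T ∈ Icc 0 T := ⟨hT.le, le_rfl⟩
  have hUc : ContinuousOn U (Icc 0 T) := fun t ht => (hU t ht).continuousWithinAt
  have hHs : ∀ t ∈ Icc 0 T, (H t)ᵀ = H t := fun t ht => by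
    simpa [IsHermitian, conjTranspose_eq_transpose_of_trivial] using (hHp t ht).1
  have hRs : ∀ t ∈ Icc 0 T, (R t)ᵀ = R t := fun t ht => by
    simpa [IsHermitian, conjTranspose_eq_transpose_of_trivial] using (hRp t ht).1
  have hPs : Pᵀ = P := by
    simpa [IsHermitian, conjTranspose_eq_transpose_of_trivial] using hP.1
  -- derivative of Uᵀ V
  have hW : ∀ t ∈ Icc 0 T, HasDerivWithinAt (fun t => (U t)ᵀ * V t)
      (-((V t)ᵀ * R t * V t + (U t)ᵀ * H t * U t)) (Icc 0 T) t := by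
    intro t ht
    convert ric_hasDeriv_mul (ric_hasDeriv_transpose (hU t ht)) (hV t ht) using 1
    simp only [Matrix.transpose_sub, Matrix.transpose_mul, hRs t ht]
    noncomm_ring
  -- symmetry
  have hsym : ∀ t ∈ Icc 0 T, (U t)ᵀ * V t - ((U t)ᵀ * V t)ᵀ = 0 := by
    refine ric_zero_bwd (C := 0) (y' := fun _ => 0) (fun t ht => ?_) (fun t ht => by simp) ?_
    · have h := (hW t ht).sub (ric_hasDeriv_transpose (hW t ht))
      convert! h using 1
      simp only [Matrix.transpose_neg, Matrix.transpose_add, Matrix.transpose_mul, hRs t ht,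
        hHs t ht, Matrix.transpose_transpose]
      noncomm_ring
    · simp [hUT, hVT, hPs]
  -- quadratic form
  have hq : ∀ x : n → ℝ, ∀ t ∈ Icc 0 T, HasDerivWithinAt (fun t => x ⬝ᵥ (((U t)ᵀ * V t) *ᵥ x))
      (-((V t *ᵥ x) ⬝ᵥ (R t *ᵥ (V t *ᵥ x)) + (U t *ᵥ x) ⬝ᵥ (H t *ᵥ (U t *ᵥ x)))) (Icc 0 T) t := by
    intro x t ht
    have h := (ric_hasDeriv_iff.mp (hW t ht))
    have h2 : HasDerivWithinAt (fun t => ∑ i, x i * ∑ j, ((U t)ᵀ * V t) i j * x j)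
      (∑ i, x i * ∑ j, (-((V t)ᵀ * R t * V t + (U t)ᵀ * H t * U t)) i j * x j) (Icc 0 T) t :=
      HasDerivWithinAt.fun_sum fun i _ => HasDerivWithinAt.const_mul _
        (HasDerivWithinAt.fun_sum fun j _ => (h i j).mul_const _)
    convert! h2 using 1
    change _ = x ⬝ᵥ ((-((V t)ᵀ * R t * V t + (U t)ᵀ * H t * U t)) *ᵥ x)
    rw [Matrix.neg_mulVec, dotProduct_neg, Matrix.add_mulVec, dotProduct_add,
      ← Matrix.mulVec_mulVec, ← Matrix.mulVec_mulVec, ← Matrix.mulVec_mulVec,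
      ← Matrix.mulVec_mulVec, Matrix.dotProduct_mulVec x (V t)ᵀ, Matrix.vecMul_transpose,
      Matrix.dotProduct_mulVec x (U t)ᵀ, Matrix.vecMul_transpose]
  have hRn : ∀ t ∈ Icc 0 T, ∀ y : n → ℝ, 0 ≤ y ⬝ᵥ (R t *ᵥ y) := fun t ht y => by
    simpa using (hRp t ht).dotProduct_mulVec_nonneg y
  have hHn : ∀ t ∈ Icc 0 T, ∀ y : n → ℝ, 0 ≤ y ⬝ᵥ (H t *ᵥ y) := fun t ht y => by
    simpa using (hHp t ht).dotProduct_mulVec_nonneg y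
  have hanti : ∀ x : n → ℝ, AntitoneOn (fun t => x ⬝ᵥ (((U t)ᵀ * V t) *ᵥ x)) (Icc 0 T) := by
    intro x
    refine antitoneOn_of_hasDerivWithinAt_nonpos (convex_Icc 0 T)
      (fun t ht => (hq x t ht).continuousWithinAt)
      (fun t ht => (hq x t (interior_subset ht)).mono interior_subset) (fun t ht => ?_)
    have ht' := interior_subset ht
    have := hRn t ht' (V t *ᵥ x)
    have := hHn t ht' (U t *ᵥ x)
    linarith
  have hqT : ∀ x : n → ℝ, 0 ≤ x ⬝ᵥ (((U T)ᵀ * V T) *ᵥ x) := fun x => by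
    simpa [hUT, hVT] using hP.dotProduct_mulVec_nonneg x
  have hWp : ∀ t ∈ Icc 0 T, ((U t)ᵀ * V t).PosSemidef := by
    intro t ht
    refine PosSemidef.of_dotProduct_mulVec_nonneg ?_ (fun x => ?_)
    · rw [IsHermitian, conjTranspose_eq_transpose_of_trivial]
      exact (sub_eq_zero.mp (hsym t ht)).symm
    · simpa using (hqT x).trans (hanti x ht hTm ht.2)
  -- invertibility
  have hunit : ∀ s ∈ Icc 0 T, IsUnit (U s).det := by
    intro s hs
    rw [isUnit_iff_ne_zero]
    intro hdet
    obtain ⟨x, hx0, hx⟩ := Matrix.exists_mulVec_eq_zero_iff.mpr hdet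
    apply hx0
    rcases hs.2.eq_or_lt with rfl | hsT
    · simpa [hUT] using hx
    have hsub : Icc s T ⊆ Icc 0 T := Icc_subset_Icc_left hs.1
    have hqs : x ⬝ᵥ (((U s)ᵀ * V s) *ᵥ x) = 0 := by
      rw [sub_eq_zero.mp (hsym s hs), Matrix.transpose_mul, Matrix.transpose_transpose,
        ← Matrix.mulVec_mulVec, hx]
      simp
    have hq0 : ∀ t ∈ Icc s T, x ⬝ᵥ (((U t)ᵀ * V t) *ᵥ x) = 0 := by
      intro t ht
      refine le_antisymm ?_ ?_
      · rw [← hqs]; exact hanti x hs (hsub ht) ht.1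
      · exact (hqT x).trans (hanti x (hsub ht) hTm ht.2)
    have hRV : ∀ t ∈ Icc s T, R t *ᵥ (V t *ᵥ x) = 0 := by
      intro t ht
      have h1 := (hq x t (hsub ht)).mono hsub
      have h2 : HasDerivWithinAt (fun t => x ⬝ᵥ (((U t)ᵀ * V t) *ᵥ x)) 0 (Icc s T) t :=
        (hasDerivWithinAt_const t (Icc s T) (0 : ℝ)).congr hq0 (hq0 t ht)
      have h3 := (uniqueDiffOn_Icc hsT t ht).eq_deriv _ h1 h2
      have h4 := hRn t (hsub ht) (V t *ᵥ x)
      have h5 := hHn t (hsub ht) (U t *ᵥ x)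
      refine ((hRp t (hsub ht)).dotProduct_mulVec_zero_iff _).mp ?_
      simp only [star_trivial]
      linarith
    -- U x as a one-column matrix
    have hux : ∀ t ∈ Icc s T, HasDerivWithinAt (fun t => U t * replicateCol Unit x)
        (A t * (U t * replicateCol Unit x)) (Icc s T) t := by
      intro t ht
      convert! ric_hasDeriv_mul ((hU t (hsub ht)).mono hsub)
        (hasDerivWithinAt_const t (Icc s T) (replicateCol Unit x)) using 1
      have : R t * V t * replicateCol Unit x = 0 := by
        rw [Matrix.mul_assoc, ← replicateCol_mulVec, ← replicateCol_mulVec, hRV t ht]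
        rfl
      rw [Matrix.sub_mul, this]
      simp [Matrix.mul_assoc]
    obtain ⟨C, hC⟩ := isCompact_Icc.exists_bound_of_continuousOn (hA.mono hsub)
    have := ric_zero_fwd (C := Fintype.card n * C) hux (fun t ht => by
      refine (ric_norm_mul_le _ _).trans ?_
      have := hC t ht
      gcongr) (by rw [← replicateCol_mulVec, hx]; rfl) T ⟨hsT.le, le_rfl⟩
    rw [hUT, Matrix.one_mul] at this
    funext i
    exact congrFun (congrFun this i) ()
  refine ⟨fun t => V t * (U t)⁻¹, fun t ht => ?_, by simp [hUT, hVT], fun t ht => ?_⟩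
  · have h := (hWp t ht).conjTranspose_mul_mul_same (U t)⁻¹
    rw [conjTranspose_eq_transpose_of_trivial] at h
    convert h using 1
    have e : ((U t)⁻¹)ᵀ * (U t)ᵀ = 1 := by
      rw [← Matrix.transpose_mul, Matrix.mul_nonsing_inv _ (hunit t ht), Matrix.transpose_one]
    rw [← Matrix.mul_assoc, e, Matrix.one_mul]
  · convert! ric_hasDeriv_mul (hV t ht) (ric_hasDeriv_inv ht hUc (hU t ht) hunit) using 1
    have e := Matrix.mul_nonsing_inv _ (hunit t ht)
    have e1 : H t * U t * (U t)⁻¹ = H t := by rw [Matrix.mul_assoc, e, Matrix.mul_one]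
    have e2 : A t * U t * (U t)⁻¹ = A t := by rw [Matrix.mul_assoc, e, Matrix.mul_one]
    rw [Matrix.sub_mul, Matrix.neg_mul, e1, Matrix.mul_sub, Matrix.mul_neg, Matrix.sub_mul,
      Matrix.mul_assoc (U t)⁻¹ (A t * U t), e2]
    noncomm_ring

lemma ric_unique {T : ℝ} (A H R : ℝ → Matrix n n ℝ)
    (hA : ContinuousOn A (Icc 0 T)) (hR : ContinuousOn R (Icc 0 T)) (X Y : ℝ → Matrix n n ℝ)
    (hXY : X T = Y T)
    (hX : ∀ t ∈ Icc 0 T, HasDerivWithinAt X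
        (-(H t + X t * A t + (A t)ᵀ * X t - X t * R t * X t)) (Icc 0 T) t)
    (hY : ∀ t ∈ Icc 0 T, HasDerivWithinAt Y
        (-(H t + Y t * A t + (A t)ᵀ * Y t - Y t * R t * Y t)) (Icc 0 T) t) :
    EqOn X Y (Icc 0 T) := by
  have hXc : ContinuousOn X (Icc 0 T) := fun t ht => (hX t ht).continuousWithinAt
  have hYc : ContinuousOn Y (Icc 0 T) := fun t ht => (hY t ht).continuousWithinAt
  obtain ⟨C1, hC1⟩ := isCompact_Icc.exists_bound_of_continuousOn
    (f := fun t => A t - R t * Y t) (hA.sub (hR.mul hYc))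
  obtain ⟨C2, hC2⟩ := isCompact_Icc.exists_bound_of_continuousOn
    (f := fun t => (A t)ᵀ - X t * R t)
    ((continuous_id.matrix_transpose.comp_continuousOn hA).sub (hXc.mul hR))
  have key := ric_zero_bwd (T := T) (C := Fintype.card n * C1 + Fintype.card n * C2)
    (y := fun t => X t - Y t)
    (y' := fun t => -((X t - Y t) * (A t - R t * Y t) + ((A t)ᵀ - X t * R t) * (X t - Y t)))
    (fun t ht => by
      convert! (hX t ht).sub (hY t ht) using 1
      noncomm_ring)
    (fun t ht => by
      rw [norm_neg]
      refine (norm_add_le _ _).trans ?_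
      rw [add_mul]
      refine add_le_add ((ric_norm_mul_le _ _).trans ?_) ((ric_norm_mul_le _ _).trans ?_)
      · rw [mul_right_comm]
        have := hC1 t ht
        gcongr
      · have := hC2 t ht
        gcongr) (by simp [hXY])
  exact fun t ht => sub_eq_zero.mp (key t ht)

end riccati

section alg

set_option linter.unusedSectionVars false

variable {n m : Type*} [Fintype n] [DecidableEq n] [Fintype m] [DecidableEq m]

lemma ric_posDef {δ : ℝ} (hδ : 0 < δ) {N : Matrix m m ℝ} {K : Matrix n n ℝ} (σ : Matrix n m ℝ)
    (hN : (N - δ • (1 : Matrix m m ℝ)).PosSemidef) (hK : K.PosSemidef) :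
    N.PosDef ∧ (N + σᵀ * K * σ).PosDef := by
  have h1 : N.PosDef := by
    have := (PosDef.one (n := m) (R := ℝ)).smul hδ
    have h := PosDef.posSemidef_add hN this
    simpa using h
  refine ⟨h1, h1.add_posSemidef ?_⟩
  simpa [conjTranspose_eq_transpose_of_trivial] using hK.conjTranspose_mul_mul_same σ

lemma ric_schur {δ : ℝ} (hδ : 0 < δ) {N : Matrix m m ℝ} {K Q : Matrix n n ℝ} (σ : Matrix n m ℝ)
    (σx : Matrix n n ℝ) (J : Matrix m n ℝ)
    (hN : (N - δ • (1 : Matrix m m ℝ)).PosSemidef) (hK : K.PosSemidef)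
    (hQ : (Q - Jᵀ * N⁻¹ * J).PosSemidef) :
    (Q + σxᵀ * K * σx - (J + σᵀ * K * σx)ᵀ * (N + σᵀ * K * σ)⁻¹ * (J + σᵀ * K * σx)).PosSemidef := by
  obtain ⟨h1, h2⟩ := ric_posDef hδ σ hN hK
  have hKs : Kᵀ = K := by
    simpa [IsHermitian, conjTranspose_eq_transpose_of_trivial] using hK.1
  have := h1.isUnit.invertible
  have := h2.isUnit.invertible
  have b1 := (PosDef.fromBlocks₁₁ J Q h1).mpr
    (by simpa [conjTranspose_eq_transpose_of_trivial] using hQ)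
  have b2 := hK.conjTranspose_mul_mul_same (fromCols σ σx)
  have b3 := b1.add b2
  have e : fromBlocks N J Jᴴ Q + (fromCols σ σx)ᴴ * K * fromCols σ σx =
      fromBlocks (N + σᵀ * K * σ) (J + σᵀ * K * σx) (J + σᵀ * K * σx)ᴴ (Q + σxᵀ * K * σx) := by
    rw [conjTranspose_eq_transpose_of_trivial, conjTranspose_eq_transpose_of_trivial,
      conjTranspose_eq_transpose_of_trivial, transpose_fromCols, fromRows_mul,
      fromRows_mul_fromCols, fromBlocks_add, transpose_add, transpose_mul, transpose_mul,
      transpose_transpose, hKs, ← Matrix.mul_assoc]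
  rw [e] at b3
  simpa [conjTranspose_eq_transpose_of_trivial] using (PosDef.fromBlocks₁₁ _ _ h2).mp b3

lemma ric_alg {Mi : Matrix m m ℝ} (hMi : Miᵀ = Mi) {X : Matrix n n ℝ} (hX : Xᵀ = X) (ρ : ℝ)
    (Q b : Matrix n n ℝ) (b1 : Matrix n m ℝ) (S : Matrix m n ℝ) :
    Q + X * b + bᵀ * X - ρ • X - (S + b1ᵀ * X)ᵀ * Mi * (S + b1ᵀ * X) =
      (Q - Sᵀ * Mi * S) + X * (b - (ρ / 2) • (1 : Matrix n n ℝ) - b1 * Mi * S) +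
        (b - (ρ / 2) • (1 : Matrix n n ℝ) - b1 * Mi * S)ᵀ * X - X * (b1 * Mi * b1ᵀ) * X := by
  have e : ρ • X = (ρ / 2) • X + (ρ / 2) • X := by rw [← add_smul]; congr 1; ring
  rw [e]
  simp only [transpose_add, transpose_sub, transpose_mul, transpose_smul, transpose_one,
    transpose_transpose, hMi, hX, Matrix.mul_add, Matrix.add_mul, Matrix.mul_sub, Matrix.sub_mul,
    Matrix.mul_smul, Matrix.smul_mul, Matrix.mul_one, Matrix.one_mul, Matrix.mul_assoc]
  abel

end alg

/-- Well-posedness of the matrix Riccati ODE for `Λ` given `K` (Step 6(ii)). -/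
theorem riccati_ODE_Lambda_wellposed
    (d d₁ : ℕ) (hd : 1 ≤ d) (hd₁ : 1 ≤ d₁)
    (T ρ δ : ℝ) (hT : 0 < T) (hρ : 0 ≤ ρ) (hδ : 0 < δ)
    (K : ℝ → Matrix (Fin d) (Fin d) ℝ)
    (hKc : ContinuousOn K (Icc 0 T))
    (hKbdd : ∃ C : ℝ, ∀ t ∈ Icc (0 : ℝ) T, ‖K t‖ ≤ C)
    (hKpsd : ∀ t ∈ Icc (0 : ℝ) T, (K t).PosSemidef)
    (Qhat bhatx σhatx : ℝ → Matrix (Fin d) (Fin d) ℝ)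
    (bhat₁ σhat₁ : ℝ → Matrix (Fin d) (Fin d₁) ℝ)
    (Ihat : ℝ → Matrix (Fin d₁) (Fin d) ℝ)
    (Nhat : ℝ → Matrix (Fin d₁) (Fin d₁) ℝ)
    -- continuity of the coefficients on [0,T]
    (hQc : ContinuousOn Qhat (Icc 0 T)) (hbxc : ContinuousOn bhatx (Icc 0 T))
    (hσxc : ContinuousOn σhatx (Icc 0 T)) (hb₁c : ContinuousOn bhat₁ (Icc 0 T))
    (hσ₁c : ContinuousOn σhat₁ (Icc 0 T)) (hIc : ContinuousOn Ihat (Icc 0 T))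
    (hNc : ContinuousOn Nhat (Icc 0 T))
    -- boundedness of the coefficients on [0,T]
    (hbdd : ∃ C : ℝ, ∀ t ∈ Icc (0 : ℝ) T,
      ‖Qhat t‖ ≤ C ∧ ‖bhatx t‖ ≤ C ∧ ‖σhatx t‖ ≤ C ∧ ‖bhat₁ t‖ ≤ C ∧ ‖σhat₁ t‖ ≤ C ∧
        ‖Ihat t‖ ≤ C ∧ ‖Nhat t‖ ≤ C)
    -- pointwise structural conditions
    (hQ : ∀ t ∈ Icc (0 : ℝ) T, (Qhat t).PosSemidef)
    (hN : ∀ t ∈ Icc (0 : ℝ) T, (Nhat t).IsHermitian ∧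
      (Nhat t - δ • (1 : Matrix (Fin d₁) (Fin d₁) ℝ)).PosSemidef)
    (hQI : ∀ t ∈ Icc (0 : ℝ) T, (Qhat t - (Ihat t)ᵀ * (Nhat t)⁻¹ * (Ihat t)).PosSemidef)
    (Phat : Matrix (Fin d) (Fin d) ℝ) (hPhat : Phat.PosSemidef) :
    ∃ Λ : ℝ → Matrix (Fin d) (Fin d) ℝ,
      ((∀ t ∈ Icc (0 : ℝ) T, (Λ t).PosSemidef) ∧
        ContinuousOn Λ (Icc 0 T) ∧
        (∃ C : ℝ, ∀ t ∈ Icc (0 : ℝ) T, ‖Λ t‖ ≤ C) ∧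
        Λ T = Phat ∧
        ∀ t ∈ Icc (0 : ℝ) T,
          HasDerivWithinAt Λ
            (-(Qhat t + (σhatx t)ᵀ * K t * σhatx t + Λ t * bhatx t + (bhatx t)ᵀ * Λ t -
              ρ • Λ t -
              (Ihat t + (σhat₁ t)ᵀ * K t * σhatx t + (bhat₁ t)ᵀ * Λ t)ᵀ *
                (Nhat t + (σhat₁ t)ᵀ * K t * σhat₁ t)⁻¹ *
                (Ihat t + (σhat₁ t)ᵀ * K t * σhatx t + (bhat₁ t)ᵀ * Λ t)))
            (Icc 0 T) t) ∧
      ∀ Λ' : ℝ → Matrix (Fin d) (Fin d) ℝ,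
        ((∀ t ∈ Icc (0 : ℝ) T, (Λ' t).PosSemidef) ∧
          ContinuousOn Λ' (Icc 0 T) ∧
          (∃ C : ℝ, ∀ t ∈ Icc (0 : ℝ) T, ‖Λ' t‖ ≤ C) ∧
          Λ' T = Phat ∧
          ∀ t ∈ Icc (0 : ℝ) T,
            HasDerivWithinAt Λ'
              (-(Qhat t + (σhatx t)ᵀ * K t * σhatx t + Λ' t * bhatx t + (bhatx t)ᵀ * Λ' t -
                ρ • Λ' t -
                (Ihat t + (σhat₁ t)ᵀ * K t * σhatx t + (bhat₁ t)ᵀ * Λ' t)ᵀ *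
                  (Nhat t + (σhat₁ t)ᵀ * K t * σhat₁ t)⁻¹ *
                  (Ihat t + (σhat₁ t)ᵀ * K t * σhatx t + (bhat₁ t)ᵀ * Λ' t)))
              (Icc 0 T) t) →
        EqOn Λ' Λ (Icc 0 T) := by
  have hMpd : ∀ t ∈ Icc (0 : ℝ) T, (Nhat t + (σhat₁ t)ᵀ * K t * σhat₁ t).PosDef := fun t ht =>
    (ric_posDef hδ (σhat₁ t) (hN t ht).2 (hKpsd t ht)).2
  have hMi : ∀ t ∈ Icc (0 : ℝ) T, ((Nhat t + (σhat₁ t)ᵀ * K t * σhat₁ t)⁻¹)ᵀ =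
      (Nhat t + (σhat₁ t)ᵀ * K t * σhat₁ t)⁻¹ := fun t ht => by
    simpa [IsHermitian, conjTranspose_eq_transpose_of_trivial] using (hMpd t ht).1.inv
  have cmul : ∀ {p q r : ℕ} {f : ℝ → Matrix (Fin p) (Fin q) ℝ} {g : ℝ → Matrix (Fin q) (Fin r) ℝ},
      ContinuousOn f (Icc 0 T) → ContinuousOn g (Icc 0 T) →
      ContinuousOn (fun t => f t * g t) (Icc 0 T) := fun hf hg =>
    (Continuous.matrix_mul continuous_fst continuous_snd).comp_continuousOn (hf.prodMk hg)
  have ctr : ∀ {p q : ℕ} {f : ℝ → Matrix (Fin p) (Fin q) ℝ},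
      ContinuousOn f (Icc 0 T) → ContinuousOn (fun t => (f t)ᵀ) (Icc 0 T) := fun hf =>
    continuous_id.matrix_transpose.comp_continuousOn hf
  have hMc : ContinuousOn (fun t => (Nhat t + (σhat₁ t)ᵀ * K t * σhat₁ t)⁻¹) (Icc 0 T) :=
    ric_continuousOn_inv (hNc.add (cmul (cmul (ctr hσ₁c) hKc) hσ₁c))
      (fun t ht => (Matrix.isUnit_iff_isUnit_det _).mp (hMpd t ht).isUnit)
  have hSc : ContinuousOn (fun t => Ihat t + (σhat₁ t)ᵀ * K t * σhatx t) (Icc 0 T) :=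
    hIc.add (cmul (cmul (ctr hσ₁c) hKc) hσxc)
  set Mi := fun t => (Nhat t + (σhat₁ t)ᵀ * K t * σhat₁ t)⁻¹ with hMi_def
  set S := fun t => Ihat t + (σhat₁ t)ᵀ * K t * σhatx t with hS_def
  set A : ℝ → Matrix (Fin d) (Fin d) ℝ := fun t =>
    bhatx t - (ρ / 2) • (1 : Matrix (Fin d) (Fin d) ℝ) - bhat₁ t * Mi t * S t with hA_def
  set H : ℝ → Matrix (Fin d) (Fin d) ℝ := fun t =>
    Qhat t + (σhatx t)ᵀ * K t * σhatx t - (S t)ᵀ * Mi t * S t with hH_def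
  set R : ℝ → Matrix (Fin d) (Fin d) ℝ := fun t => bhat₁ t * Mi t * (bhat₁ t)ᵀ with hR_def
  have hAc : ContinuousOn A (Icc 0 T) :=
    (hbxc.sub continuousOn_const).sub (cmul (cmul hb₁c hMc) hSc)
  have hHc : ContinuousOn H (Icc 0 T) :=
    (hQc.add (cmul (cmul (ctr hσxc) hKc) hσxc)).sub (cmul (cmul (ctr hSc) hMc) hSc)
  have hRc : ContinuousOn R (Icc 0 T) := cmul (cmul hb₁c hMc) (ctr hb₁c)
  have hHp : ∀ t ∈ Icc (0 : ℝ) T, (H t).PosSemidef := fun t ht =>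
    ric_schur hδ (σhat₁ t) (σhatx t) (Ihat t) (hN t ht).2 (hKpsd t ht) (hQI t ht)
  have hRp : ∀ t ∈ Icc (0 : ℝ) T, (R t).PosSemidef := fun t ht => by
    have := (hMpd t ht).inv.posSemidef.mul_mul_conjTranspose_same (bhat₁ t)
    rwa [conjTranspose_eq_transpose_of_trivial] at this
  -- the right-hand side in reduced form
  have hred : ∀ X : Matrix (Fin d) (Fin d) ℝ, X.PosSemidef → ∀ t ∈ Icc (0 : ℝ) T,
      -(Qhat t + (σhatx t)ᵀ * K t * σhatx t + X * bhatx t + (bhatx t)ᵀ * X - ρ • X -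
          (Ihat t + (σhat₁ t)ᵀ * K t * σhatx t + (bhat₁ t)ᵀ * X)ᵀ *
            (Nhat t + (σhat₁ t)ᵀ * K t * σhat₁ t)⁻¹ *
            (Ihat t + (σhat₁ t)ᵀ * K t * σhatx t + (bhat₁ t)ᵀ * X)) =
        -(H t + X * A t + (A t)ᵀ * X - X * R t * X) := by
    intro X hX t ht
    have hXs : Xᵀ = X := by
      simpa [IsHermitian, conjTranspose_eq_transpose_of_trivial] using hX.1
    rw [ric_alg (hMi t ht) hXs ρ]
  obtain ⟨Λ, hΛp, hΛT, hΛ⟩ := ric_exists hT A H R hAc hHc hRc hHp hRp Phat hPhat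
  have hΛc : ContinuousOn Λ (Icc 0 T) := fun t ht => (hΛ t ht).continuousWithinAt
  refine ⟨Λ, ⟨hΛp, hΛc, isCompact_Icc.exists_bound_of_continuousOn hΛc, hΛT, fun t ht => ?_⟩, ?_⟩
  · rw [hred _ (hΛp t ht) t ht]
    exact hΛ t ht
  · rintro Λ' ⟨hp, -, -, hT', hd'⟩
    refine ric_unique A H R hAc hRc Λ' Λ (hT'.trans hΛT.symm) (fun t ht => ?_) hΛ
    have := hd' t ht
    rw [hred _ (hp t ht) t ht] at this
    exact this
end

section
/- Existence of a positive semidefinite solution to the stationary algebraic Riccati equation (infinite horizon, Step 6(i) of Section 3.1): Let d, d₁ ≥ 1 and let Q ∈ S^d be positive semidefinite, bₓ, σₓ, b̃ₓ, σ̃ₓ ∈ ℝ^{d×d}, b₁, σ₁ ∈ ℝ^{d×d₁}, I ∈ ℝ^{d₁×d}, and N ∈ S^{d₁} positive definite, with Q − Iᵀ N⁻¹ I positive semidefinite. Assume the discount condition ρ > 2(‖bₓ‖ + ‖b̃ₓ‖ + 8(‖σₓ‖² + ‖σ̃ₓ‖²)). Then there exists a symmetric positive semidefinite d × d matrix K satisfying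 Q + σₓᵀ K σₓ + K bₓ + bₓᵀ K − ρ K − (I + σ₁ᵀ K σₓ + b₁ᵀ K)ᵀ (N + σ₁ᵀ K σ₁)⁻¹ (I + σ₁ᵀ K σₓ + b₁ᵀ K) = 0. -/
open Matrix

/-- The operator norm of a real `d × d` matrix, viewed as a linear operator on
Euclidean space `ℝ^d`. -/
noncomputable def matOpNorm {d : ℕ} (M : Matrix (Fin d) (Fin d) ℝ) : ℝ :=
  ‖LinearMap.toContinuousLinearMap (Matrix.toEuclideanLin M)‖

section helpers

variable {n m : ℕ}

/-- The quadratic form of a matrix. -/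
def qf (M : Matrix (Fin n) (Fin n) ℝ) (v : Fin n → ℝ) : ℝ := v ⬝ᵥ (M *ᵥ v)

lemma qf_add (M M' : Matrix (Fin n) (Fin n) ℝ) (v : Fin n → ℝ) :
    qf (M + M') v = qf M v + qf M' v := by
  simp [qf, Matrix.add_mulVec]

lemma qf_sub (M M' : Matrix (Fin n) (Fin n) ℝ) (v : Fin n → ℝ) :
    qf (M - M') v = qf M v - qf M' v := by
  simp [qf, Matrix.sub_mulVec]

lemma qf_neg (M : Matrix (Fin n) (Fin n) ℝ) (v : Fin n → ℝ) :
    qf (-M) v = - qf M v := by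
  simp [qf, Matrix.neg_mulVec]

lemma qf_smul (c : ℝ) (M : Matrix (Fin n) (Fin n) ℝ) (v : Fin n → ℝ) :
    qf (c • M) v = c * qf M v := by
  simp [qf, Matrix.smul_mulVec]

lemma qf_smul_vec (c : ℝ) (M : Matrix (Fin n) (Fin n) ℝ) (v : Fin n → ℝ) :
    qf M (c • v) = c ^ 2 * qf M v := by
  simp [qf, Matrix.mulVec_smul]; ring

lemma qf_zero_vec (M : Matrix (Fin n) (Fin n) ℝ) : qf M 0 = 0 := by
  simp [qf]

lemma qf_one (v : Fin n → ℝ) : qf 1 v = v ⬝ᵥ v := by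
  simp [qf]

lemma qf_conj (C : Matrix (Fin n) (Fin m) ℝ) (M : Matrix (Fin n) (Fin n) ℝ) (v : Fin m → ℝ) :
    qf (Cᵀ * M * C) v = qf M (C *ᵥ v) := by
  simp only [qf, ← Matrix.mulVec_mulVec]
  rw [Matrix.dotProduct_mulVec, Matrix.vecMul_transpose]

lemma qf_transpose (M : Matrix (Fin n) (Fin n) ℝ) (v : Fin n → ℝ) :
    qf Mᵀ v = qf M v := by
  simp only [qf]
  rw [Matrix.mulVec_transpose, dotProduct_comm, ← Matrix.dotProduct_mulVec]

lemma continuous_qf (M : Matrix (Fin n) (Fin n) ℝ) : Continuous (qf M) := by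
  unfold qf
  fun_prop

lemma continuous_qf' (v : Fin n → ℝ) :
    Continuous (fun M : Matrix (Fin n) (Fin n) ℝ => qf M v) := by
  unfold qf
  fun_prop

lemma psd_iff (M : Matrix (Fin n) (Fin n) ℝ) :
    M.PosSemidef ↔ Mᵀ = M ∧ ∀ v, 0 ≤ qf M v := by
  rw [Matrix.posSemidef_iff_dotProduct_mulVec]
  simp [Matrix.IsHermitian, qf, Matrix.conjTranspose_eq_transpose_of_trivial]

lemma psd_ker {M : Matrix (Fin n) (Fin n) ℝ} (h : M.PosSemidef) {v : Fin n → ℝ}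
    (hv : qf M v = 0) : M *ᵥ v = 0 := by
  have := (h.dotProduct_mulVec_zero_iff v).1
  simp at this
  exact this hv

/-- The Lyapunov operator. -/
def lyap (A C X : Matrix (Fin n) (Fin n) ℝ) : Matrix (Fin n) (Fin n) ℝ :=
  Aᵀ * X + X * A + Cᵀ * X * C

lemma lyap_add (A C X Y : Matrix (Fin n) (Fin n) ℝ) :
    lyap A C (X + Y) = lyap A C X + lyap A C Y := by
  unfold lyap; noncomm_ring

lemma lyap_sub (A C X Y : Matrix (Fin n) (Fin n) ℝ) :
    lyap A C (X - Y) = lyap A C X - lyap A C Y := by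
  unfold lyap; noncomm_ring

lemma lyap_smul (A C X : Matrix (Fin n) (Fin n) ℝ) (c : ℝ) :
    lyap A C (c • X) = c • lyap A C X := by
  unfold lyap; simp [smul_add]

lemma lyap_transpose (A C X : Matrix (Fin n) (Fin n) ℝ) :
    (lyap A C X)ᵀ = lyap A C Xᵀ := by
  unfold lyap; simp [Matrix.mul_assoc, add_comm]

lemma qf_lyap_ker (A C X : Matrix (Fin n) (Fin n) ℝ) (hX : X.PosSemidef) (v : Fin n → ℝ)
    (hv : qf X v = 0) : 0 ≤ qf (lyap A C X) v := by
  have hk := psd_ker hX hv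
  have h1 : qf (X * A) v = qf (Aᵀ * X) v := by
    rw [← qf_transpose, Matrix.transpose_mul, ((psd_iff X).1 hX).1]
  have h2 : qf (Aᵀ * X) v = 0 := by
    simp [qf, ← Matrix.mulVec_mulVec, hk]
  unfold lyap
  rw [qf_add, qf_add, h1, h2, qf_conj]
  simpa using ((psd_iff X).1 hX).2 _

lemma lyap_pos (A C P : Matrix (Fin n) (Fin n) ℝ) (hP : P.PosSemidef)
    (hL : ∀ v, v ≠ 0 → qf (lyap A C P) v < 0) (v : Fin n → ℝ) (hv : v ≠ 0) : 0 < qf P v := by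
  rcases (((psd_iff P).1 hP).2 v).lt_or_eq with h | h
  · exact h
  · exact absurd (qf_lyap_ker A C P hP v h.symm) (not_le.2 (hL v hv))

lemma lyap_nonneg (A C P X : Matrix (Fin n) (Fin n) ℝ) (hP : P.PosSemidef)
    (hL : ∀ v, v ≠ 0 → qf (lyap A C P) v < 0) (hX : Xᵀ = X)
    (hLX : ∀ v, qf (lyap A C X) v ≤ 0) : X.PosSemidef := by
  have hPp := lyap_pos A C P hP hL
  rw [psd_iff]
  refine ⟨hX, ?_⟩
  by_contra hcon
  push Not at hcon
  obtain ⟨w, hw⟩ := hcon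
  have hw0 : w ≠ 0 := by
    rintro rfl
    simp [qf_zero_vec] at hw
  have hns : ∀ v ∈ Metric.sphere (0 : Fin n → ℝ) 1, v ≠ 0 := by
    intro v hv h
    simp [h] at hv
  have hnorm : ∀ v : Fin n → ℝ, v ≠ 0 → ‖v‖⁻¹ • v ∈ Metric.sphere (0 : Fin n → ℝ) 1 := by
    intro v hv
    simp [norm_smul, hv]
  have hcont : ContinuousOn (fun v => qf X v / qf P v) (Metric.sphere (0 : Fin n → ℝ) 1) :=
    (continuous_qf X).continuousOn.div (continuous_qf P).continuousOn
      (fun v hv => (hPp v (hns v hv)).ne')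
  obtain ⟨v, hv, hmin⟩ := (isCompact_sphere (0 : Fin n → ℝ) 1).exists_isMinOn
    ⟨_, hnorm w hw0⟩ hcont
  set t := qf X v / qf P v with ht
  have hge : ∀ u, u ≠ 0 → t * qf P u ≤ qf X u := by
    intro u hu
    have h1 : t ≤ qf X (‖u‖⁻¹ • u) / qf P (‖u‖⁻¹ • u) := hmin (hnorm u hu)
    have hu' : (‖u‖⁻¹) ^ 2 ≠ 0 := by
      have : ‖u‖ ≠ 0 := norm_ne_zero_iff.2 hu
      positivity
    rw [qf_smul_vec, qf_smul_vec, mul_div_mul_left _ _ hu'] at h1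
    exact (le_div_iff₀ (hPp u hu)).1 h1
  have htneg : t < 0 := by
    have h1 := hge w hw0
    have h2 := hPp w hw0
    by_contra h
    push Not at h
    nlinarith [mul_nonneg h h2.le]
  have hY : (X - t • P).PosSemidef := by
    rw [psd_iff]
    refine ⟨by simp [hX, ((psd_iff P).1 hP).1], fun u => ?_⟩
    by_cases hu : u = 0
    · simp [hu, qf_zero_vec]
    · rw [qf_sub, qf_smul]; linarith [hge u hu]
  have hv0 := hns v hv
  have hYv : qf (X - t • P) v = 0 := by
    rw [qf_sub, qf_smul, ht, div_mul_cancel₀ _ (hPp v hv0).ne', sub_self]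
  have := qf_lyap_ker A C _ hY v hYv
  rw [lyap_sub, lyap_smul, qf_sub, qf_smul] at this
  nlinarith [hLX v, mul_pos_of_neg_of_neg htneg (hL v hv0)]

lemma eq_zero_of_psd_neg {X : Matrix (Fin n) (Fin n) ℝ} (h1 : X.PosSemidef)
    (h2 : (-X).PosSemidef) : X = 0 := by
  have : ∀ v, X *ᵥ v = 0 := fun v => psd_ker h1 (le_antisymm
    (by have := ((psd_iff _).1 h2).2 v; rw [qf_neg] at this; linarith) (((psd_iff _).1 h1).2 v))
  ext i j
  have := congrFun (this (Pi.single j 1)) i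
  simpa using this

lemma lyap_inj (A C P X : Matrix (Fin n) (Fin n) ℝ) (hP : P.PosSemidef)
    (hL : ∀ v, v ≠ 0 → qf (lyap A C P) v < 0) (hX : Xᵀ = X)
    (h0 : lyap A C X = 0) : X = 0 := by
  apply eq_zero_of_psd_neg
  · exact lyap_nonneg A C P X hP hL hX (by simp [h0, qf])
  · refine lyap_nonneg A C P (-X) hP hL (by simp [hX]) ?_
    have : lyap A C (-X) = 0 := by
      have := lyap_smul A C X (-1)
      simpa [h0] using this
    simp [this, qf]

lemma lyap_solve (A C P G : Matrix (Fin n) (Fin n) ℝ) (hP : P.PosSemidef)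
    (hL : ∀ v, v ≠ 0 → qf (lyap A C P) v < 0) (hG : Gᵀ = G) :
    ∃ X : Matrix (Fin n) (Fin n) ℝ, Xᵀ = X ∧ lyap A C X = G := by
  let T : Matrix (Fin n) (Fin n) ℝ →ₗ[ℝ] Matrix (Fin n) (Fin n) ℝ :=
    { toFun := fun X => lyap A C (X + Xᵀ) + (X - Xᵀ)
      map_add' := by
        intro X Y
        simp only [Matrix.transpose_add, lyap_add]; abel
      map_smul' := by
        intro c X
        simp only [Matrix.transpose_smul, ← smul_add, lyap_smul, ← smul_sub, RingHom.id_apply] }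
  have key : ∀ X, (T X)ᵀ = T X → Xᵀ = X := by
    intro X h
    simp only [T, LinearMap.coe_mk, AddHom.coe_mk, Matrix.transpose_add, lyap_transpose,
      Matrix.transpose_sub, Matrix.transpose_transpose] at h
    rw [add_comm Xᵀ X] at h
    have h := add_left_cancel h
    ext i j
    have := congrFun (congrFun h i) j
    simp at this ⊢
    linarith
  have hval : ∀ X, Xᵀ = X → T X = lyap A C (X + X) := by
    intro X h
    simp [T, h]
  have hinj : Function.Injective T := by
    rw [injective_iff_map_eq_zero]
    intro X hX0
    have hs := key X (by simp [hX0])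
    rw [hval X hs] at hX0
    have := lyap_inj A C P (X + X) hP hL (by simp [hs]) hX0
    ext i j
    have := congrFun (congrFun this i) j
    simp at this ⊢
    linarith
  obtain ⟨X, hX⟩ := LinearMap.injective_iff_surjective.1 hinj G
  have hs := key X (by rw [hX, hG])
  exact ⟨X + X, by simp [hs], by rw [← hval X hs, hX]⟩

lemma complete_square (R : Matrix (Fin m) (Fin m) ℝ) (S Θ : Matrix (Fin m) (Fin n) ℝ)
    (hR : R.PosDef) :
    (Θ + R⁻¹ * S)ᵀ * R * (Θ + R⁻¹ * S) = Θᵀ * R * Θ + Θᵀ * S + Sᵀ * Θ + Sᵀ * R⁻¹ * S := by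
  have hu : IsUnit R.det := hR.det_pos.ne'.isUnit
  have ht : Rᵀ = R := ((psd_iff R).1 hR.posSemidef).1
  have h1 : R * (R⁻¹ * S) = S := by rw [← Matrix.mul_assoc, Matrix.mul_nonsing_inv _ hu, Matrix.one_mul]
  have h2 : ∀ Y : Matrix (Fin m) (Fin n) ℝ, R⁻¹ * (R * Y) = Y := fun Y => by
    rw [← Matrix.mul_assoc, Matrix.nonsing_inv_mul _ hu, Matrix.one_mul]
  simp only [Matrix.transpose_add, Matrix.transpose_mul, Matrix.transpose_nonsing_inv, ht,
    Matrix.add_mul, Matrix.mul_add, Matrix.mul_assoc, h1, h2]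
  abel

lemma compact_box (c : ℝ) : IsCompact {K : Matrix (Fin n) (Fin n) ℝ |
    K.PosSemidef ∧ (c • (1 : Matrix (Fin n) (Fin n) ℝ) - K).PosSemidef} := by
  have hcpt : IsCompact (Set.pi Set.univ (fun _ : Fin n => Set.pi Set.univ
      (fun _ : Fin n => Set.Icc (-c) c)) : Set (Fin n → Fin n → ℝ)) :=
    isCompact_univ_pi fun _ => isCompact_univ_pi fun _ => isCompact_Icc
  refine IsCompact.of_isClosed_subset (t := {K : Matrix (Fin n) (Fin n) ℝ |
    K.PosSemidef ∧ (c • (1 : Matrix (Fin n) (Fin n) ℝ) - K).PosSemidef}) hcpt ?_ ?_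
  · simp only [psd_iff, Set.ofPred_and, Set.ofPred_forall]
    refine ((isClosed_eq (by fun_prop) (by fun_prop)).inter
      (isClosed_iInter fun v => isClosed_le continuous_const (continuous_qf' v))).inter
      ((isClosed_eq (by fun_prop) (by fun_prop)).inter
      (isClosed_iInter fun v => isClosed_le continuous_const
        ((continuous_qf' v).comp (by fun_prop))))
  · rintro K ⟨h1, h2⟩ i - j -
    have hs := ((psd_iff _).1 h1).1
    have q1 := ((psd_iff _).1 h1).2
    have q2 := ((psd_iff _).1 h2).2
    have hji : K j i = K i j := congrFun (congrFun hs i) j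
    have e : ∀ s : ℝ, qf K (Pi.single i 1 + s • Pi.single j 1)
        = K i i + 2 * s * K i j + s ^ 2 * K j j := by
      intro s
      simp [qf, Matrix.mulVec_add, Matrix.mulVec_smul, hji]
      ring
    have d1 : ∀ k, K k k ≤ c := by
      intro k
      have := q2 (Pi.single k 1)
      simpa [qf_sub, qf_smul, qf] using this
    have a := q1 (Pi.single i 1 + (1 : ℝ) • Pi.single j 1)
    have b := q1 (Pi.single i 1 + (-1 : ℝ) • Pi.single j 1)
    rw [e] at a b
    have := d1 i
    have := d1 j
    constructor <;> linarith

lemma matOpNorm_bound (M : Matrix (Fin n) (Fin n) ℝ) (v : Fin n → ℝ) :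
    (M *ᵥ v) ⬝ᵥ (M *ᵥ v) ≤ matOpNorm M ^ 2 * (v ⬝ᵥ v) ∧
    qf M v ≤ matOpNorm M * (v ⬝ᵥ v) := by
  have h := (LinearMap.toContinuousLinearMap (Matrix.toEuclideanLin M)).le_opNorm (WithLp.toLp 2 v)
  have hM : (LinearMap.toContinuousLinearMap (Matrix.toEuclideanLin M)) (WithLp.toLp 2 v)
    = WithLp.toLp 2 (M *ᵥ v) := by
    simp
  rw [hM] at h
  change _ ≤ matOpNorm M * _ at h
  have hn : ∀ u : Fin n → ℝ, u ⬝ᵥ u = ‖WithLp.toLp 2 u‖ ^ 2 := by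
    intro u
    rw [EuclideanSpace.real_norm_sq_eq]
    simp [dotProduct, sq]
  constructor
  · rw [hn, hn, ← mul_pow]
    gcongr
  · have := real_inner_le_norm (WithLp.toLp 2 (M *ᵥ v)) (WithLp.toLp 2 v)
    have e : inner ℝ (WithLp.toLp 2 (M *ᵥ v)) (WithLp.toLp 2 v) = qf M v := by
      simp [qf, PiLp.inner_apply, dotProduct]
    rw [e] at this
    rw [hn]
    nlinarith [norm_nonneg (WithLp.toLp 2 v)]

end helpers

/-- The Riccati operator. -/
noncomputable def ricc {d d₁ : ℕ} (ρ : ℝ) (Q bx σx : Matrix (Fin d) (Fin d) ℝ)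
    (b₁ σ₁ : Matrix (Fin d) (Fin d₁) ℝ) (I : Matrix (Fin d₁) (Fin d) ℝ)
    (N : Matrix (Fin d₁) (Fin d₁) ℝ) (K : Matrix (Fin d) (Fin d) ℝ) :
    Matrix (Fin d) (Fin d) ℝ :=
  Q + σxᵀ * K * σx + K * bx + bxᵀ * K - ρ • K -
        (I + σ₁ᵀ * K * σx + b₁ᵀ * K)ᵀ * (N + σ₁ᵀ * K * σ₁)⁻¹ *
          (I + σ₁ᵀ * K * σx + b₁ᵀ * K)

section riccati

variable {d d₁ : ℕ} (ρ : ℝ) (Q bx σx : Matrix (Fin d) (Fin d) ℝ)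
    (b₁ σ₁ : Matrix (Fin d) (Fin d₁) ℝ) (I : Matrix (Fin d₁) (Fin d) ℝ)
    (N : Matrix (Fin d₁) (Fin d₁) ℝ) (K : Matrix (Fin d) (Fin d) ℝ)

lemma R_posDef (hN : N.PosDef) (hK : K.PosSemidef) : (N + σ₁ᵀ * K * σ₁).PosDef := by
  refine hN.add_posSemidef ?_
  have := hK.conjTranspose_mul_mul_same σ₁
  simpa [Matrix.conjTranspose_eq_transpose_of_trivial] using this

lemma ricc_identity (hN : N.PosDef) (hK : K.PosSemidef) (Θ : Matrix (Fin d₁) (Fin d) ℝ) :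
    ricc ρ Q bx σx b₁ σ₁ I N K +
      (Θ + (N + σ₁ᵀ * K * σ₁)⁻¹ * (I + σ₁ᵀ * K * σx + b₁ᵀ * K))ᵀ * (N + σ₁ᵀ * K * σ₁) *
      (Θ + (N + σ₁ᵀ * K * σ₁)⁻¹ * (I + σ₁ᵀ * K * σx + b₁ᵀ * K)) =
    lyap (bx + b₁ * Θ - (ρ / 2) • (1 : Matrix (Fin d) (Fin d) ℝ)) (σx + σ₁ * Θ) K +
      (Q + Iᵀ * Θ + Θᵀ * I + Θᵀ * N * Θ) := by
  rw [complete_square _ _ _ (R_posDef σ₁ N K hN hK)]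
  have ht : Kᵀ = K := ((psd_iff K).1 hK).1
  have hρ : ρ • K = (ρ / 2) • K + (ρ / 2) • K := by rw [← add_smul]; congr 1; ring
  unfold ricc lyap
  generalize (N + σ₁ᵀ * K * σ₁)⁻¹ = W
  rw [hρ]
  generalize h : (I + σ₁ᵀ * K * σx + b₁ᵀ * K)ᵀ * W * (I + σ₁ᵀ * K * σx + b₁ᵀ * K) = Z
  simp only [Matrix.transpose_add, Matrix.transpose_sub, Matrix.transpose_mul,
    Matrix.transpose_smul, Matrix.transpose_one, Matrix.transpose_transpose, ht, Matrix.add_mul,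
    Matrix.mul_add, Matrix.sub_mul, Matrix.mul_sub, Matrix.smul_mul, Matrix.mul_smul,
    Matrix.one_mul, Matrix.mul_one, Matrix.mul_assoc]
  abel

lemma ricc_le (hN : N.PosDef) (hK : K.PosSemidef) (Θ : Matrix (Fin d₁) (Fin d) ℝ)
    (v : Fin d → ℝ) :
    qf (ricc ρ Q bx σx b₁ σ₁ I N K) v ≤
    qf (lyap (bx + b₁ * Θ - (ρ / 2) • (1 : Matrix (Fin d) (Fin d) ℝ)) (σx + σ₁ * Θ) K +
      (Q + Iᵀ * Θ + Θᵀ * I + Θᵀ * N * Θ)) v := by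
  rw [← ricc_identity ρ Q bx σx b₁ σ₁ I N K hN hK Θ, qf_add, qf_conj]
  have := ((psd_iff _).1 (R_posDef σ₁ N K hN hK).posSemidef).2
      ((Θ + (N + σ₁ᵀ * K * σ₁)⁻¹ * (I + σ₁ᵀ * K * σx + b₁ᵀ * K)) *ᵥ v)
  linarith

lemma cost_nonneg (hN : N.PosDef) (hQI : (Q - Iᵀ * N⁻¹ * I).PosSemidef)
    (Θ : Matrix (Fin d₁) (Fin d) ℝ) (v : Fin d → ℝ) :
    0 ≤ qf (Q + Iᵀ * Θ + Θᵀ * I + Θᵀ * N * Θ) v := by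
  have h := complete_square N I Θ hN
  have e : Q + Iᵀ * Θ + Θᵀ * I + Θᵀ * N * Θ =
      (Q - Iᵀ * N⁻¹ * I) + (Θ + N⁻¹ * I)ᵀ * N * (Θ + N⁻¹ * I) := by
    rw [h]; abel
  rw [e, qf_add, qf_conj]
  exact add_nonneg (((psd_iff _).1 hQI).2 v) (((psd_iff _).1 hN.posSemidef).2 _)

lemma ricc_continuousOn (hN : N.PosDef) :
    ContinuousOn (ricc ρ Q bx σx b₁ σ₁ I N) {K | K.PosSemidef} := by
  have hinv : ContinuousOn (fun K : Matrix (Fin d) (Fin d) ℝ => (N + σ₁ᵀ * K * σ₁)⁻¹) {K | K.PosSemidef} := by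
    simp only [Matrix.inv_def, Ring.inverse_eq_inv']
    have hR : Continuous (fun K : Matrix (Fin d) (Fin d) ℝ => N + σ₁ᵀ * K * σ₁) := by fun_prop
    refine ContinuousOn.smul (ContinuousOn.inv₀ hR.matrix_det.continuousOn ?_)
      hR.matrix_adjugate.continuousOn
    intro K hK
    exact (R_posDef σ₁ N K hN hK).det_pos.ne'
  unfold ricc
  refine ContinuousOn.sub (Continuous.continuousOn (by fun_prop)) ?_
  rw [continuousOn_iff_continuous_domRestrict] at hinv ⊢
  have hval : Continuous (fun K : {K : Matrix (Fin d) (Fin d) ℝ | K.PosSemidef} => K.1) :=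
    continuous_subtype_val
  have h1 : Continuous (fun K : {K : Matrix (Fin d) (Fin d) ℝ | K.PosSemidef} =>
      I + σ₁ᵀ * K.1 * σx + b₁ᵀ * K.1) := by fun_prop
  exact (h1.matrix_transpose.matrix_mul hinv).matrix_mul h1

/-- The Newton (policy improvement) step. -/
lemma newton_step (hQ : Qᵀ = Q) (hN : N.PosDef) (hK : K.PosSemidef)
    (hcost : ∀ (Θ : Matrix (Fin d₁) (Fin d) ℝ) (v : Fin d → ℝ), v ≠ 0 →
      0 < qf (Q + Iᵀ * Θ + Θᵀ * I + Θᵀ * N * Θ) v)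
    (hF : ∀ v, qf (ricc ρ Q bx σx b₁ σ₁ I N K) v ≤ 0) :
    ∃ K' : Matrix (Fin d) (Fin d) ℝ, K'.PosSemidef ∧ (K - K').PosSemidef ∧
      (∀ v, qf (ricc ρ Q bx σx b₁ σ₁ I N K') v ≤ 0) ∧
      (K' = K → ricc ρ Q bx σx b₁ σ₁ I N K = 0) := by
  set Θ := -((N + σ₁ᵀ * K * σ₁)⁻¹ * (I + σ₁ᵀ * K * σx + b₁ᵀ * K)) with hΘ
  set A := bx + b₁ * Θ - (ρ / 2) • (1 : Matrix (Fin d) (Fin d) ℝ)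
  set C := σx + σ₁ * Θ
  set G := Q + Iᵀ * Θ + Θᵀ * I + Θᵀ * N * Θ with hG
  have hsK : Kᵀ = K := ((psd_iff K).1 hK).1
  have hid : ricc ρ Q bx σx b₁ σ₁ I N K = lyap A C K + G := by
    rw [← ricc_identity ρ Q bx σx b₁ σ₁ I N K hN hK Θ]
    simp [hΘ]
  have hGt : Gᵀ = G := by
    have := ((psd_iff _).1 hN.posSemidef).1
    rw [hG]
    simp [this, hQ, Matrix.mul_assoc]
    abel
  have hL : ∀ v, v ≠ 0 → qf (lyap A C K) v < 0 := by
    intro v hv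
    have h1 := hF v
    rw [hid, qf_add] at h1
    linarith [hcost Θ v hv]
  obtain ⟨K', hs, hK'⟩ := lyap_solve A C K (-G) hK hL (by simp [hGt])
  have hp : K'.PosSemidef := by
    refine lyap_nonneg A C K K' hK hL hs fun v => ?_
    rw [hK', qf_neg]
    by_cases hv : v = 0
    · simp [hv, qf_zero_vec]
    · linarith [hcost Θ v hv]
  refine ⟨K', hp, ?_, ?_, ?_⟩
  · refine lyap_nonneg A C K _ hK hL (by simp [hs, hsK]) fun v => ?_
    rw [lyap_sub, hK', sub_neg_eq_add, ← hid]
    exact hF v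
  · intro v
    have h := ricc_le ρ Q bx σx b₁ σ₁ I N K' hN hp Θ v
    change _ ≤ qf (lyap A C K' + G) v at h
    have h4 : qf (0 : Matrix (Fin d) (Fin d) ℝ) v = 0 := by simp [qf]
    rwa [hK', neg_add_cancel, h4] at h
  · intro h
    rw [hid, ← h, hK', neg_add_cancel]

/-- Existence with strictly positive running cost, given a supersolution `c • 1`. -/
lemma exists_strict (hQ : Qᵀ = Q) (hN : N.PosDef) (c : ℝ) (hc : 0 ≤ c)
    (hcost : ∀ (Θ : Matrix (Fin d₁) (Fin d) ℝ) (v : Fin d → ℝ), v ≠ 0 →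
      0 < qf (Q + Iᵀ * Θ + Θᵀ * I + Θᵀ * N * Θ) v)
    (hsup : ∀ v, qf (ricc ρ Q bx σx b₁ σ₁ I N (c • 1)) v ≤ 0) :
    ∃ K : Matrix (Fin d) (Fin d) ℝ, (K.PosSemidef ∧
      (c • (1 : Matrix (Fin d) (Fin d) ℝ) - K).PosSemidef) ∧
      ricc ρ Q bx σx b₁ σ₁ I N K = 0 := by
  set B := {K : Matrix (Fin d) (Fin d) ℝ | K.PosSemidef ∧
      (c • (1 : Matrix (Fin d) (Fin d) ℝ) - K).PosSemidef} with hB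
  have hBc : IsCompact B := compact_box c
  have hFc : ContinuousOn (ricc ρ Q bx σx b₁ σ₁ I N) B :=
    (ricc_continuousOn ρ Q bx σx b₁ σ₁ I N hN).mono fun K h => h.1
  have hcl : IsClosed {M : Matrix (Fin d) (Fin d) ℝ | ∀ v, qf M v ≤ 0} := by
    simp only [Set.ofPred_forall]
    exact isClosed_iInter fun v => isClosed_le (continuous_qf' v) continuous_const
  have hS : IsCompact (B ∩ ricc ρ Q bx σx b₁ σ₁ I N ⁻¹' {M | ∀ v, qf M v ≤ 0}) :=
    hBc.of_isClosed_subset (hFc.preimage_isClosed_of_isClosed hBc.isClosed hcl)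
      Set.inter_subset_left
  have hc1 : (c • (1 : Matrix (Fin d) (Fin d) ℝ)).PosSemidef := Matrix.PosSemidef.one.smul hc
  obtain ⟨K, ⟨hKB, hKF⟩, hmin⟩ := hS.exists_isMinOn
    ⟨c • 1, ⟨hc1, by rw [sub_self]; exact Matrix.PosSemidef.zero⟩, hsup⟩
    (f := Matrix.trace) (Continuous.continuousOn (by fun_prop))
  refine ⟨K, hKB, ?_⟩
  obtain ⟨K', hp, hle, hF', hfin⟩ := newton_step ρ Q bx σx b₁ σ₁ I N K hQ hN hKB.1 hcost hKF
  apply hfin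
  have hmem : K' ∈ B ∩ ricc ρ Q bx σx b₁ σ₁ I N ⁻¹' {M | ∀ v, qf M v ≤ 0} := by
    refine ⟨⟨hp, ?_⟩, hF'⟩
    have := hKB.2.add hle
    simpa using this
  have h1 : K.trace ≤ K'.trace := hmin hmem
  have h2 : (K - K').trace = 0 := le_antisymm (by rw [Matrix.trace_sub]; linarith) hle.trace_nonneg
  have := hle.trace_eq_zero_iff.1 h2
  exact (sub_eq_zero.1 this).symm

end riccati

/-- Existence of a positive semidefinite solution to the stationary algebraic Riccati
equation (infinite horizon, Step 6(i) of Section 3.1). -/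
theorem stationary_riccati_existence
    (d d₁ : ℕ) (hd : 1 ≤ d) (hd₁ : 1 ≤ d₁) (ρ : ℝ) (hρpos : 0 < ρ)
    (Q : Matrix (Fin d) (Fin d) ℝ) (hQ : Q.PosSemidef)
    (bx σx btx σtx : Matrix (Fin d) (Fin d) ℝ)
    (b₁ σ₁ : Matrix (Fin d) (Fin d₁) ℝ)
    (I : Matrix (Fin d₁) (Fin d) ℝ)
    (N : Matrix (Fin d₁) (Fin d₁) ℝ) (hN : N.PosDef)
    (hQI : (Q - Iᵀ * N⁻¹ * I).PosSemidef)
    (hdisc : ρ > 2 * (matOpNorm bx + matOpNorm btx +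
      8 * (matOpNorm σx ^ 2 + matOpNorm σtx ^ 2))) :
    ∃ K : Matrix (Fin d) (Fin d) ℝ, K.PosSemidef ∧
      Q + σxᵀ * K * σx + K * bx + bxᵀ * K - ρ • K -
        (I + σ₁ᵀ * K * σx + b₁ᵀ * K)ᵀ * (N + σ₁ᵀ * K * σ₁)⁻¹ *
          (I + σ₁ᵀ * K * σx + b₁ᵀ * K) = 0 := by
  obtain ⟨c, hc, hsup⟩ : ∃ c : ℝ, 0 ≤ c ∧ ∀ v, c * (2 * qf bx v - ρ * (v ⬝ᵥ v) +
      (σx *ᵥ v) ⬝ᵥ (σx *ᵥ v)) + qf Q v + v ⬝ᵥ v ≤ 0 := by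
    have n1 : ∀ M : Matrix (Fin d) (Fin d) ℝ, 0 ≤ matOpNorm M := fun M => norm_nonneg _
    set δ := ρ - 2 * matOpNorm bx - matOpNorm σx ^ 2 with hδ
    have hδ0 : 0 < δ := by
      have := n1 btx
      have := sq_nonneg (matOpNorm σx)
      have := sq_nonneg (matOpNorm σtx)
      linarith
    refine ⟨(matOpNorm Q + 1) / δ, div_nonneg (by linarith [n1 Q]) hδ0.le, fun v => ?_⟩
    have hv : 0 ≤ v ⬝ᵥ v := by
      have := ((psd_iff _).1 (Matrix.PosSemidef.one (n := Fin d) (R := ℝ))).2 v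
      rwa [qf_one] at this
    have e1 := (matOpNorm_bound bx v).2
    have e2 := (matOpNorm_bound σx v).1
    have e3 := (matOpNorm_bound Q v).2
    have e4 : 2 * qf bx v - ρ * (v ⬝ᵥ v) + (σx *ᵥ v) ⬝ᵥ (σx *ᵥ v) ≤ - δ * (v ⬝ᵥ v) := by
      rw [hδ]; linarith
    have hcn : 0 ≤ (matOpNorm Q + 1) / δ := div_nonneg (by linarith [n1 Q]) hδ0.le
    have e5 := mul_le_mul_of_nonneg_left e4 hcn
    have e6 : (matOpNorm Q + 1) / δ * (- δ * (v ⬝ᵥ v)) = - (matOpNorm Q + 1) * (v ⬝ᵥ v) := by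
      field_simp
    linarith
  have hdot : ∀ v : Fin d → ℝ, v ≠ 0 → 0 < v ⬝ᵥ v := by
    intro v hv
    have := dotProduct_star_self_pos_iff.2 hv
    simpa using this
  have hQs : Qᵀ = Q := ((psd_iff _).1 hQ).1
  have hc1 : (c • (1 : Matrix (Fin d) (Fin d) ℝ)).PosSemidef := Matrix.PosSemidef.one.smul hc
  have hshift : ∀ (ε : ℝ) (K : Matrix (Fin d) (Fin d) ℝ),
      ricc ρ (Q + ε • 1) bx σx b₁ σ₁ I N K = ricc ρ Q bx σx b₁ σ₁ I N K + ε • 1 := by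
    intro ε K
    unfold ricc
    abel
  set B := {K : Matrix (Fin d) (Fin d) ℝ | K.PosSemidef ∧
      (c • (1 : Matrix (Fin d) (Fin d) ℝ) - K).PosSemidef} with hB
  have hex : ∀ ε : ℝ, 0 < ε → ε ≤ 1 → ∃ K ∈ B, ricc ρ Q bx σx b₁ σ₁ I N K = (-ε) • 1 := by
    intro ε h0 h1
    obtain ⟨K, hK, hF⟩ := exists_strict ρ (Q + ε • 1) bx σx b₁ σ₁ I N (by simp [hQs]) hN c hc
      (by
        intro Θ v hv
        have a := cost_nonneg Q I N hN hQI Θ v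
        have b := mul_pos h0 (hdot v hv)
        simp only [qf_add, qf_smul, qf_one] at a ⊢
        linarith)
      (by
        intro v
        have h := ricc_le ρ (Q + ε • 1) bx σx b₁ σ₁ I N (c • 1) hN hc1 0 v
        have h4 : qf (lyap (bx + b₁ * (0 : Matrix (Fin d₁) (Fin d) ℝ) -
            (ρ / 2) • (1 : Matrix (Fin d) (Fin d) ℝ)) (σx + σ₁ * (0 : Matrix (Fin d₁) (Fin d) ℝ))
            (c • 1) + (Q + ε • 1 + Iᵀ * (0 : Matrix (Fin d₁) (Fin d) ℝ) +
            (0 : Matrix (Fin d₁) (Fin d) ℝ)ᵀ * I + (0 : Matrix (Fin d₁) (Fin d) ℝ)ᵀ * N *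
            (0 : Matrix (Fin d₁) (Fin d) ℝ))) v =
            c * (2 * qf bx v - ρ * (v ⬝ᵥ v) + (σx *ᵥ v) ⬝ᵥ (σx *ᵥ v)) + qf Q v
              + ε * (v ⬝ᵥ v) := by
          rw [lyap_smul]
          have h5 : qf (σxᵀ * σx) v = (σx *ᵥ v) ⬝ᵥ (σx *ᵥ v) := by
            have := qf_conj σx 1 v
            rwa [Matrix.mul_one, qf_one] at this
          simp [lyap, qf_add, qf_sub, qf_smul, qf_one, qf_transpose, h5]
          ring
        rw [h4] at h
        have h6 : ε * (v ⬝ᵥ v) ≤ v ⬝ᵥ v := by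
          by_cases hv : v = 0
          · simp [hv]
          · nlinarith [hdot v hv]
        have h7 := hsup v
        linarith)
    refine ⟨K, hK, ?_⟩
    rw [hshift] at hF
    rw [neg_smul]
    exact eq_neg_of_add_eq_zero_left hF
  have hcomp : IsCompact (ricc ρ Q bx σx b₁ σ₁ I N '' B) :=
    (compact_box c).image_of_continuousOn
      ((ricc_continuousOn ρ Q bx σx b₁ σ₁ I N hN).mono fun K h => h.1)
  have hlim : Filter.Tendsto (fun k : ℕ => (-(1 / ((k : ℝ) + 1))) • (1 : Matrix (Fin d) (Fin d) ℝ))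
      Filter.atTop (nhds 0) := by
    have := (tendsto_one_div_add_atTop_nhds_zero_nat (𝕜 := ℝ)).neg.smul_const
      (1 : Matrix (Fin d) (Fin d) ℝ)
    simpa using this
  have hmem : (0 : Matrix (Fin d) (Fin d) ℝ) ∈ ricc ρ Q bx σx b₁ σ₁ I N '' B := by
    refine hcomp.isClosed.mem_of_tendsto hlim (Filter.Eventually.of_forall fun k => ?_)
    obtain ⟨K, hK, hF⟩ := hex (1 / ((k : ℝ) + 1)) (by positivity) (by
      rw [div_le_one (by positivity)]
      have : (0 : ℝ) ≤ k := Nat.cast_nonneg k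
      linarith)
    exact ⟨K, hK, hF⟩
  obtain ⟨K, hK, hF⟩ := hmem
  exact ⟨K, hK.1, hF⟩
end
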